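/- arXiv:1106.6151 — 2 statements merged into one kernel-verified Lean document; each statement's English description precedes it below -/
import Mathlib

section
/- Let k be a PAC field whose characteristic does not divide n(n-1), where n ≥ 2 is an integer (equivalently, n(n-1) is invertible in k). Then every field extension E/k of degree n (such an extension is automatically separable) can be realized by a trinomial of the form Y^n - Y + b: there exists b ∈ k such that Y^n - Y + b is irreducible in k[Y] and E is generated over k by a root of Y^n - Y + b. -/
/-!
Write `K` for an algebraic closure of `k`, and let `y` enumerate the roots of `Y ^ n - Y + T` in a
splitting field `L` over `F = K(T)`, indexed by the `n` embeddings `σ : E → K`.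

*The Galois group of `L / F` is the full symmetric group* (`exists_gal_perm`). It is 2-transitive
(`exists_gal_pair`): for distinct roots `y, z`, the quantities `s = z / y` and `v = 1 / y` satisfy
`v ^ (n - 1) = 1 + s + ⋯ + s ^ (n - 1)`, a curve that is irreducible by Eisenstein's criterion at a
primitive `n`-th root of unity, so all pairs `(y, z)` are generic points of the same curve. It
contains a transposition (`exists_gal_swap`): choose `y₀` with `n y₀ ^ (n - 1) = 1`; modulo a prime
above the branch point `T = y₀ - y₀ ^ n` exactly two roots collide, so a nontrivial element of the
inertia group there has to swap these two. A primitive group with a transposition is symmetric.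

*The resolvent.* For `a ∈ E` put `G = ∏_π (W - ∑_σ σ(a) y_{π σ})`, the product being over the
permutations `π` of the embeddings. By the theorem on symmetric functions, applied first to the
conjugates `σ(a)` and then to the roots `y`, `G` has coefficients in `k[T]` (`exists_resolvent`).
For suitable `a` the sums are pairwise distinct (`exists_separating`, by linear independence of
the embeddings), and then `G` is irreducible over `K`, because the Galois group permutes the sums
transitively (`irreducible_resolvent`).

*Specialization.* The PAC property provides `t, w ∈ k` with `G(t, w) = 0` and `G(t, W)` separable.
Hence the roots of `Y ^ n - Y + t` can be numbered `z_σ` so that `w = ∑_σ σ(a) z_σ`. For an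
automorphism `γ` of `K / k`, applying `γ` to this identity and using that distinct numberings give
distinct sums yields `γ(z_σ) = z_{γ σ}`. So there is `x ∈ E` with `σ(x) = z_σ` for every `σ`; it is
a root of `Y ^ n - Y + t`, and it generates `E` as its conjugates are distinct
(`exists_generator`).
-/

open Polynomial

/-- A field `k` is PAC (pseudo algebraically closed): every polynomial in two
variables over `k` that remains irreducible over an algebraic closure of `k`
has infinitely many zeros in `k × k`. -/
def IsPAC (k : Type*) [Field k] : Prop :=
  ∀ f : MvPolynomial (Fin 2) k,
    Irreducible (MvPolynomial.map (algebraMap k (AlgebraicClosure k)) f) →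
    {x : k × k | MvPolynomial.eval ![x.1, x.2] f = 0}.Infinite

set_option linter.unusedSectionVars false

/-! ### Two-transitivity of the Galois group of the trinomial -/

/-- A primitive `n`-th root of unity is a simple root of `1 + X + ⋯ + X ^ (n - 1)`. -/
theorem exists_simple_root_geom {K : Type*} [Field K] [IsAlgClosed K] {n : ℕ} (hn : 2 ≤ n)
    (h1 : (n : K) ≠ 0) :
    ∃ z : K, (∑ i ∈ Finset.range n, (X : K[X]) ^ i).eval z = 0 ∧
      (derivative (∑ i ∈ Finset.range n, (X : K[X]) ^ i)).eval z ≠ 0 := by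
  have : NeZero (n : K) := ⟨h1⟩
  obtain ⟨z, hz⟩ := HasEnoughRootsOfUnity.exists_primitiveRoot K n
  have hz1 : z ≠ 1 := hz.ne_one (by omega)
  have key : (∑ i ∈ Finset.range n, (X : K[X]) ^ i) * (X - 1) = X ^ n - 1 := geom_sum_mul _ _
  have e0 := congrArg (eval z) key
  have e1 := congrArg (fun p => eval z (derivative p)) key
  simp only [derivative_mul, eval_add, eval_mul, derivative_sub, derivative_X, derivative_one,
    derivative_X_pow, eval_sub, eval_X, eval_one, eval_pow, sub_zero, mul_one,
    hz.pow_eq_one, sub_self, eval_natCast, map_natCast] at e0 e1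
  have hz0 : eval z (∑ i ∈ Finset.range n, (X : K[X]) ^ i) = 0 := by
    rcases mul_eq_zero.mp e0 with h | h
    · exact h
    · exact absurd (sub_eq_zero.mp h) hz1
  refine ⟨z, hz0, fun h => ?_⟩
  rw [h, hz0] at e1
  simp only [zero_mul, add_zero] at e1
  exact mul_ne_zero h1 (pow_ne_zero _ (hz.ne_zero (by omega))) e1.symm

/-- The curve `v ^ (n - 1) = 1 + s + ⋯ + s ^ (n - 1)`, whose points parametrize the pairs of distinct
roots of `Y ^ n - Y + T` through `s = z / y` and `v = 1 / y`, is irreducible: Eisenstein's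
criterion applies at a simple root of the right-hand side. -/
theorem irreducible_X_pow_sub_geom {K : Type*} [Field K] [IsAlgClosed K] {n : ℕ} (hn : 2 ≤ n)
    (h1 : (n : K) ≠ 0) :
    Irreducible ((X : K[X][X]) ^ (n - 1) - C (∑ i ∈ Finset.range n, (X : K[X]) ^ i)) := by
  obtain ⟨z, hz0, hz1⟩ := exists_simple_root_geom (K := K) hn h1
  set H : K[X] := ∑ i ∈ Finset.range n, (X : K[X]) ^ i
  have hm : n - 1 ≠ 0 := by omega
  have hmon : ((X : K[X][X]) ^ (n - 1) - C H).Monic := monic_X_pow_sub_C _ hm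
  have hnd : ((X : K[X][X]) ^ (n - 1) - C H).natDegree = n - 1 := natDegree_X_pow_sub_C
  have hprime : (Ideal.span {X - C z}).IsPrime :=
    (Ideal.span_singleton_prime (X_sub_C_ne_zero z)).mpr (prime_X_sub_C z)
  refine IsEisensteinAt.irreducible (𝓟 := Ideal.span {X - C z}) ⟨?_, ?_, ?_⟩ hprime
    hmon.isPrimitive (by omega)
  · rw [hmon.leadingCoeff]
    exact fun h => hprime.ne_top ((Ideal.eq_top_iff_one _).mpr h)
  · intro i hi
    rw [hnd] at hi
    rw [coeff_sub, coeff_X_pow, coeff_C, if_neg hi.ne, zero_sub]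
    split_ifs
    · exact neg_mem (Ideal.mem_span_singleton.mpr (dvd_iff_isRoot.mpr hz0))
    · simp
  · rw [coeff_sub, coeff_X_pow, coeff_C, if_neg hm.symm, zero_sub, if_pos rfl, neg_mem_iff,
      Ideal.span_singleton_pow, Ideal.mem_span_singleton]
    rintro ⟨q, hq⟩
    apply hz1
    rw [hq]
    simp [derivative_mul, derivative_pow]

section

variable {K : Type*} [Field K] {L : Type*} [Field L] [Algebra K[X] L]
  [Algebra K L] [IsScalarTower K K[X] L] [FaithfulSMul K[X] L]

theorem transcendental_algebraMap_X : Transcendental K (algebraMap K[X] L X) := by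
  have h := transcendental_X K
  rwa [transcendental_algebraMap_iff (FaithfulSMul.algebraMap_injective K[X] L)]

theorem transcendental_root {n : ℕ} {y : L} (hy : y ^ n - y + algebraMap K[X] L X = 0) :
    Transcendental K y := by
  intro h
  refine transcendental_algebraMap_X (K := K) (L := L) ?_
  have : algebraMap K[X] L X = y - y ^ n := by linear_combination hy
  rw [this]
  exact h.sub (h.pow n)

/-- Two distinct roots of `Y ^ n - Y + T` satisfy `z ^ n - y ^ n = z - y`; dividing by
`y ^ n (z / y - 1)` gives the equation of the curve of pairs. -/
theorem geom_of_roots {n : ℕ} (hn : 2 ≤ n) {y z : L} (hyz : y ≠ z) (hy0 : y ≠ 0)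
    (hy : y ^ n - y + algebraMap K[X] L X = 0) (hz : z ^ n - z + algebraMap K[X] L X = 0) :
    (y⁻¹) ^ (n - 1) = ∑ i ∈ Finset.range n, (z / y) ^ i := by
  have h := geom_sum_mul (z / y) n
  have hne : z / y - 1 ≠ 0 := by
    rw [sub_ne_zero, Ne, div_eq_one_iff_eq hy0]; exact hyz.symm
  apply mul_right_cancel₀ hne
  rw [h]
  obtain ⟨m, rfl⟩ : ∃ m, n = m + 1 := ⟨n - 1, by omega⟩
  simp only [Nat.add_sub_cancel]
  have hd : z ^ (m+1) - y ^ (m+1) = z - y := by linear_combination hz - hy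
  rw [div_pow, inv_pow]
  field_simp
  rw [hd]
  ring

theorem transcendental_ratio {n : ℕ} (hn : 2 ≤ n) {y z : L} (hyz : y ≠ z) (hy0 : y ≠ 0)
    (hy : y ^ n - y + algebraMap K[X] L X = 0) (hz : z ^ n - z + algebraMap K[X] L X = 0) :
    Transcendental K (z / y) := by
  intro h
  refine transcendental_root (K := K) hy ?_
  have h2 := geom_of_roots (K := K) hn hyz hy0 hy hz
  have h3 : IsAlgebraic K (y⁻¹ ^ (n - 1)) := by
    rw [h2]
    rw [isAlgebraic_iff_isIntegral]
    exact IsIntegral.sum _ fun i _ => (h.pow i).isIntegral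
  have h4 : IsAlgebraic K (y⁻¹) := IsAlgebraic.of_pow (by omega) h3
  simpa using h4.inv
end

section
variable {K : Type*} [Field K] [IsAlgClosed K] {F L : Type*} [Field F] [Algebra K[X] F]
  [IsFractionRing K[X] F] [Field L] [Algebra K[X] L] [Algebra F L] [IsScalarTower K[X] F L]
  [Algebra K L] [IsScalarTower K K[X] L]

/-- The Galois group acts 2-transitively on the roots of `Y ^ n - Y + T`: any two pairs of distinct
roots are images of the generic point of one irreducible curve. -/
theorem exists_gal_pair [Normal F L] {n : ℕ} (hn : 2 ≤ n) (h1 : (n : K) ≠ 0) {y z y' z' : L}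
    (hyz : y ≠ z) (hyz' : y' ≠ z')
    (hy : y ^ n - y + algebraMap K[X] L X = 0) (hz : z ^ n - z + algebraMap K[X] L X = 0)
    (hy' : y' ^ n - y' + algebraMap K[X] L X = 0) (hz' : z' ^ n - z' + algebraMap K[X] L X = 0) :
    ∃ g : Gal(L/F), g y = y' ∧ g z = z' := by
  have : FaithfulSMul K[X] F := inferInstance
  have : FaithfulSMul K[X] L := (faithfulSMul_iff_algebraMap_injective _ _).mpr <| by
    rw [IsScalarTower.algebraMap_eq K[X] F L]
    exact (algebraMap F L).injective.comp (FaithfulSMul.algebraMap_injective _ _)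
  set M := FractionRing K[X]
  set H : K[X] := ∑ i ∈ Finset.range n, (X : K[X]) ^ i with hH
  set h : K[X][X] := X ^ (n - 1) - C H with hh
  have hirr : Irreducible (h.map (algebraMap K[X] M)) :=
    ((monic_X_pow_sub_C _ (by omega)).irreducible_iff_irreducible_map_fraction_map).mp
      (irreducible_X_pow_sub_geom hn h1)
  have : Fact (Irreducible (h.map (algebraMap K[X] M))) := ⟨hirr⟩
  -- the function field of the curve of pairs, with coordinates `s = z / y` and `v = 1 / y`
  let N := AdjoinRoot (h.map (algebraMap K[X] M))
  let v0 : N := AdjoinRoot.root _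
  let s0 : N := AdjoinRoot.of _ (algebraMap K[X] M X)
  have key : ∀ y z : L, y ≠ z → y ^ n - y + algebraMap K[X] L X = 0 →
      z ^ n - z + algebraMap K[X] L X = 0 → y ≠ 0 ∧ ∃ θ : N →+* L,
        (∀ a : K, θ (AdjoinRoot.of _ (algebraMap K[X] M (C a))) = algebraMap K L a) ∧
        θ v0 = y⁻¹ ∧ θ s0 = z / y := by
    intro y z hyz hy hz
    have hy0 : y ≠ 0 := by
      rintro rfl
      exact transcendental_root (K := K) hy isAlgebraic_zero
    have hinj : Function.Injective (aeval (R := K) (z / y)).toRingHom :=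
      transcendental_iff_injective.mp (transcendental_ratio hn hyz hy0 hy hz)
    have hc : (IsFractionRing.lift hinj : M →+* L).comp (algebraMap K[X] M) =
        (aeval (R := K) (z / y)).toRingHom := by
      ext <;> simp
    have hroot : (h.map (algebraMap K[X] M)).eval₂ (IsFractionRing.lift hinj : M →+* L) y⁻¹ = 0 := by
      rw [eval₂_map, hc, hh, eval₂_sub, eval₂_X_pow, eval₂_C,
        geom_of_roots (K := K) hn hyz hy0 hy hz, hH]
      simp
    refine ⟨hy0, AdjoinRoot.lift (IsFractionRing.lift hinj) y⁻¹ hroot, fun a => ?_,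
      AdjoinRoot.lift_root hroot, ?_⟩
    · refine (AdjoinRoot.lift_of hroot).trans ?_
      refine (RingHom.congr_fun hc (C a)).trans ?_
      simp
    · refine (AdjoinRoot.lift_of hroot).trans ?_
      refine (RingHom.congr_fun hc X).trans ?_
      simp
  obtain ⟨hy0, θ, hθK, hθv, hθs⟩ := key y z hyz hy hz
  obtain ⟨hy0', θ', hθK', hθv', hθs'⟩ := key y' z' hyz' hy' hz'
  let KN : K →+* N := (AdjoinRoot.of (h.map (algebraMap K[X] M))).comp
    ((algebraMap K[X] M).comp C)
  -- `N` becomes an extension of `F` by sending the variable `T` to `y - y ^ n`, where `y = 1 / v`.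
  let ψ : K[X] →+* N := eval₂RingHom KN (v0⁻¹ - v0⁻¹ ^ n)
  have hψ : θ.comp ψ = algebraMap K[X] L := by
    ext a
    · simp only [ψ, KN, RingHom.comp_apply, coe_eval₂RingHom, eval₂_C, hθK]
      rw [IsScalarTower.algebraMap_apply K K[X] L]; rfl
    · simp [ψ, hθv]; linear_combination -hy
  have hψ' : θ'.comp ψ = algebraMap K[X] L := by
    ext a
    · simp only [ψ, KN, RingHom.comp_apply, coe_eval₂RingHom, eval₂_C, hθK']
      rw [IsScalarTower.algebraMap_apply K K[X] L]; rfl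
    · simp [ψ, hθv']; linear_combination -hy'
  have hψi : Function.Injective ψ := by
    refine Function.Injective.of_comp (f := θ) ?_
    have := FaithfulSMul.algebraMap_injective K[X] L
    rw [← hψ] at this
    exact this
  let : Algebra F N := (IsFractionRing.lift hψi : F →+* N).toAlgebra
  have hF : ∀ η : N →+* L, η.comp ψ = algebraMap K[X] L →
      ∀ x : F, η (algebraMap F N x) = algebraMap F L x := by
    intro η hη x
    have : η.comp (algebraMap F N) = algebraMap F L := by
      apply IsLocalization.ringHom_ext (nonZeroDivisors K[X])
      rw [← IsScalarTower.algebraMap_eq K[X] F L, ← hη, RingHom.comp_assoc]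
      congr 1
      ext x <;> simp [RingHom.algebraMap_toAlgebra]
    exact RingHom.congr_fun this x
  let θA : N →ₐ[F] L := { θ with commutes' := hF θ hψ }
  let θA' : N →ₐ[F] L := { θ' with commutes' := hF θ' hψ' }
  let : Algebra N L := θ.toAlgebra
  have : IsScalarTower F N L := IsScalarTower.of_algebraMap_eq fun x => (hF θ hψ x).symm
  let τ : L →ₐ[F] L := θA'.liftNormal L
  have hτ : ∀ x : N, τ (θ x) = θ' x := fun x => AlgHom.liftNormal_commutes θA' L x
  have : Algebra.IsAlgebraic F L := Normal.toIsAlgebraic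
  have hb : Function.Bijective τ := Algebra.IsAlgebraic.algHom_bijective τ
  have e1 : τ y = y' := by
    have := hτ v0
    rw [hθv, hθv', map_inv₀] at this
    exact inv_injective this
  refine ⟨AlgEquiv.ofBijective τ hb, e1, ?_⟩
  have := hτ s0
  rw [hθs, hθs', map_div₀, e1] at this
  simpa [div_left_inj' hy0'] using this
end

/-! ### Inertia above a point of the affine line -/

section
variable {K : Type*} [Field K] [IsAlgClosed K]

theorem perfectField_residueField_X_sub_C (b : K) (p : Ideal K[X]) [p.IsPrime]
    (hp : p = Ideal.span {X - C b}) : PerfectField p.ResidueField := by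
  subst hp
  have hmax : (Ideal.span {X - C b}).IsMaximal :=
    PrincipalIdealRing.isMaximal_of_irreducible (irreducible_X_sub_C b)
  let e1 : K ≃+* (K[X] ⧸ Ideal.span {X - C b}) :=
    (quotientSpanXSubCAlgEquiv b).symm.toRingEquiv
  let e2 := RingEquiv.ofBijective _
    (Ideal.bijective_algebraMap_quotient_residueField (Ideal.span {X - C b}))
  exact PerfectField.of_ringEquiv (e1.trans e2)

/-- If the prime of `R` below `P` is nonzero and generates an ideal contained in `P ^ 2`, then `P` is
ramified: otherwise the maximal ideal of `S_P` would be idempotent. -/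
theorem ramificationIdx_ne_one_of_le_sq {R S : Type*} [CommRing R] [CommRing S] [IsDomain S]
    [IsNoetherianRing S] [Algebra R S] (P : Ideal S) [P.IsPrime] (hP0 : P.under R ≠ ⊥)
    [FaithfulSMul R S]
    (h : (P.under R).map (algebraMap R S) ≤ P ^ 2) : P.ramificationIdx R ≠ 1 := by
  intro h1
  rw [Ideal.ramificationIdx_def, ENat.toNat_eq_iff_eq_natCast, Nat.cast_one,
    Module.length_eq_one_iff,
    isSimpleModule_iff_isCoatom, ← Ideal.isMaximal_def, IsLocalRing.isMaximal_iff] at h1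
  · set Sq := Localization.AtPrime P
    have h2 : (P.under R).map (algebraMap R Sq) ≤ IsLocalRing.maximalIdeal Sq ^ 2 := by
      rw [IsScalarTower.algebraMap_eq R S Sq, ← Ideal.map_map,
        ← Localization.AtPrime.map_eq_maximalIdeal, ← Ideal.map_pow]
      exact Ideal.map_mono h
    have h3 : IsIdempotentElem (IsLocalRing.maximalIdeal Sq) := by
      refine le_antisymm Ideal.mul_le_left ?_
      rw [← sq]
      exact h1 ▸ h2
    have : IsNoetherianRing Sq := IsLocalization.isNoetherianRing P.primeCompl _ inferInstance
    rcases (Ideal.isIdempotentElem_iff_eq_bot_or_top_of_isLocalRing _).mp h3 with h4 | h4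
    · apply hP0
      rw [eq_bot_iff]
      intro x hx
      have hx' : algebraMap R Sq x = 0 := by
        have := Ideal.mem_map_of_mem (algebraMap R Sq) hx
        rw [h1, h4] at this
        exact this
      rw [IsScalarTower.algebraMap_apply R S Sq] at hx'
      have := IsLocalization.injective Sq P.primeCompl_le_nonZeroDivisors
        (hx'.trans (map_zero _).symm)
      exact FaithfulSMul.algebraMap_injective R S (this.trans (map_zero _).symm)
    · exact (IsLocalRing.maximalIdeal.isMaximal Sq).ne_top h4

variable {F L : Type*} [Field F] [Algebra K[X] F]
  [IsFractionRing K[X] F] [Field L] [Algebra K[X] L] [Algebra F L] [IsScalarTower K[X] F L]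

/-- A prime `P` above `X - C b` with `X - C b ∈ P ^ 2` has a nontrivial inertia group, since the
order of that group is the ramification index. -/
theorem exists_inertia_ne_one [FiniteDimensional F L] [IsGalois F L] (b : K)
    (P : Ideal (integralClosure K[X] L)) [P.IsPrime]
    (hP : algebraMap K[X] (integralClosure K[X] L) (X - C b) ∈ P ^ 2) :
    ∃ g : Gal(L/F), g ≠ 1 ∧ ∀ x : integralClosure K[X] L,
      ∃ d ∈ P, g (x : L) = x + d := by
  let B := integralClosure K[X] L
  have : FaithfulSMul K[X] L := (faithfulSMul_iff_algebraMap_injective _ _).mpr <| by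
    rw [IsScalarTower.algebraMap_eq K[X] F L]
    exact (algebraMap F L).injective.comp (FaithfulSMul.algebraMap_injective _ _)
  have := IsIntegralClosure.isDedekindDomain K[X] F L B
  have := IsIntegralClosure.isFractionRing_of_finite_extension K[X] F L B
  have := IsIntegralClosure.finite K[X] F L B
  let : MulSemiringAction Gal(L/F) B := IsIntegralClosure.MulSemiringAction K[X] F L B
  have := IsGaloisGroup.of_isFractionRing Gal(L/F) K[X] B F L
  have : Module.IsTorsionFree K[X] B := inferInstance
  have : Module.Free K[X] B := inferInstance
  have : Module.Flat K[X] B := inferInstance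
  have hmax : (Ideal.span {X - C b}).IsMaximal :=
    PrincipalIdealRing.isMaximal_of_irreducible (irreducible_X_sub_C b)
  have hu : P.under K[X] = Ideal.span {X - C b} := by
    refine (hmax.eq_of_le (Ideal.IsPrime.under K[X] P).ne_top ?_).symm
    rw [Ideal.span_singleton_le_iff_mem]
    exact Ideal.mem_comap.mpr (Ideal.pow_le_self two_ne_zero hP)
  have : PerfectField (P.under K[X]).ResidueField := perfectField_residueField_X_sub_C b _ hu
  have hcard : Nat.card (P.inertia Gal(L/F)) = P.ramificationIdx K[X] := by
    rw [Ideal.card_inertia_eq_ramificationIdxIn (P.under K[X]),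
      Ideal.ramificationIdxIn_eq_ramificationIdx (P.under K[X]) P Gal(L/F)]
  have hne : P.ramificationIdx K[X] ≠ 1 := by
    apply ramificationIdx_ne_one_of_le_sq
    · rw [hu, Ne, Ideal.span_singleton_eq_bot]; exact X_sub_C_ne_zero b
    · rw [hu, Ideal.map_span, Set.image_singleton, Ideal.span_singleton_le_iff_mem]
      exact hP
  have hnb : P.inertia Gal(L/F) ≠ ⊥ := by
    rintro h
    rw [h, Subgroup.card_bot] at hcard
    exact hne hcard.symm
  obtain ⟨⟨g, hg⟩, hg1⟩ := Subgroup.ne_bot_iff_exists_ne_one.mp hnb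
  refine ⟨g, fun h => hg1 (Subtype.ext h), fun x => ⟨g • x - x, hg x, ?_⟩⟩
  have h1 : ((g • x : B) : L) = g (x : L) := algebraMap_galRestrict_apply K[X] g x
  simp only [AddSubgroupClass.coe_sub, h1, add_sub_cancel]
end

/-! ### The Galois group of the trinomial is symmetric -/

theorem X_sub_C_pow_dvd_prod {κ ι : Type*} [CommRing κ] [Fintype ι] (y : ι → κ) (a : κ)
    (s : Finset ι) (hs : ∀ i ∈ s, y i = a) : (X - C a) ^ s.card ∣ ∏ i, (X - C (y i)) := by
  have h : ∏ i ∈ s, (X - C (y i)) = (X - C a) ^ s.card :=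
    Finset.prod_eq_pow_card fun i hi => by rw [hs i hi]
  rw [← h]
  exact Finset.prod_dvd_prod_of_subset _ _ _ (Finset.subset_univ s)

theorem eval_derivative_prod_of_eq {κ ι : Type*} [CommRing κ] [Fintype ι] [DecidableEq ι]
    (y : ι → κ) {i j : ι} (hij : i ≠ j) (h : y i = y j) :
    (derivative (∏ i, (X - C (y i)))).eval (y i) = 0 := by
  obtain ⟨Q, hQ⟩ := X_sub_C_pow_dvd_prod y (y i) {i, j} (by simp [h])
  rw [Finset.card_pair hij] at hQ
  rw [hQ]
  simp [derivative_mul, derivative_pow]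

theorem eval_derivative_derivative_prod_of_eq {κ ι : Type*} [CommRing κ] [Fintype ι]
    [DecidableEq ι] (y : ι → κ) {i j l : ι} (hij : i ≠ j) (hil : i ≠ l) (hjl : j ≠ l)
    (h : y j = y i) (h' : y l = y i) :
    (derivative (derivative (∏ i, (X - C (y i))))).eval (y i) = 0 := by
  obtain ⟨Q, hQ⟩ := X_sub_C_pow_dvd_prod y (y i) {i, j, l} (by simp [h, h'])
  rw [Finset.card_eq_three.mpr ⟨i, j, l, hij, hil, hjl, rfl⟩] at hQ
  rw [hQ]
  simp [derivative_mul, derivative_pow]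

/-- If `n y₀ ^ (n - 1) = 1` and `b = y₀ - y₀ ^ n`, then `Y ^ n - Y + b` has exactly one multiple
root, namely `y₀`, of multiplicity exactly two.  A multiple root `c` satisfies `n c ^ (n - 1) = 1`,
so that `(n - 1) c = n b`, which determines `c`. -/
theorem unique_collision {κ ι : Type*} [CommRing κ] [IsDomain κ] [Fintype ι] [DecidableEq ι]
    {n : ℕ} (hn : 2 ≤ n) (h1 : (n : κ) ≠ 0) (h2 : ((n - 1 : ℕ) : κ) ≠ 0) (y : ι → κ) (b y0 : κ)
    (hy0 : n * y0 ^ (n - 1) = 1) (hb : b = y0 - y0 ^ n)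
    (hP : ∏ i, (X - C (y i)) = X ^ n - X + C b) :
    ∃ i j, i ≠ j ∧ y i = y0 ∧ y j = y0 ∧ ∀ l m, l ≠ m → y l = y m → l = i ∨ l = j := by
  obtain ⟨m, rfl⟩ : ∃ m, n = m + 2 := ⟨n - 2, by omega⟩
  have e1 : m + 2 - 1 = m + 1 := by omega
  simp only [e1] at *
  have hev : ∀ c : κ, (∏ i, (X - C (y i))).eval c = c ^ (m + 2) - c + b := by
    intro c; rw [hP]; simp
  have hd : ∀ c : κ, (derivative (∏ i, (X - C (y i)))).eval c = (m + 2 : ℕ) * c ^ (m + 1) - 1 := by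
    intro c; rw [hP]; simp; left; ring
  have hdd : ∀ c : κ, (derivative (derivative (∏ i, (X - C (y i))))).eval c =
      (m + 2 : ℕ) * ((m + 1 : ℕ) * c ^ m) := by
    intro c; rw [hP]; simp; left; ring
  have hroot : ∀ i, (y i) ^ (m + 2) - y i + b = 0 := by
    intro i
    rw [← hev, eval_prod]
    exact Finset.prod_eq_zero (Finset.mem_univ i) (by simp)
  have hcol : ∀ l m, l ≠ m → y l = y m → y l = y0 := by
    intro i j hij h
    have h3 := eval_derivative_prod_of_eq y hij h
    rw [hd] at h3
    apply mul_left_cancel₀ h2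
    have h4 := hroot i
    push_cast at *
    subst hb
    linear_combination (m + 2 : κ) * (-1) * h4 + y i * h3 + (- y0) * hy0
  have hi : ∃ i, y i = y0 := by
    have h3 := hev y0
    rw [hb, eval_prod, show y0 ^ (m + 2) - y0 + (y0 - y0 ^ (m + 2)) = 0 by ring,
      Finset.prod_eq_zero_iff] at h3
    obtain ⟨i, -, hi⟩ := h3
    exact ⟨i, by simpa [sub_eq_zero, eq_comm] using hi⟩
  obtain ⟨i, hi⟩ := hi
  have hj : ∃ j, i ≠ j ∧ y j = y0 := by
    have h3 := hd y0
    rw [← Finset.mul_prod_erase _ _ (Finset.mem_univ i), hi, hy0] at h3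
    simp only [derivative_mul, derivative_sub, derivative_X, derivative_C, eval_add, eval_mul,
      eval_sub, eval_X, eval_C, sub_self, zero_mul, add_zero, sub_zero, one_mul,
      eval_prod, Finset.prod_eq_zero_iff] at h3
    obtain ⟨j, hj, h⟩ := h3
    exact ⟨j, (Finset.ne_of_mem_erase hj).symm, (sub_eq_zero.mp h).symm⟩
  obtain ⟨j, hij, hj⟩ := hj
  refine ⟨i, j, hij, hi, hj, fun l m hlm h => ?_⟩
  by_contra! hne
  have h3 := eval_derivative_derivative_prod_of_eq y hij hne.1.symm hne.2.symm (hj.trans hi.symm)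
    ((hcol l m hlm h).trans hi.symm)
  rw [hdd, hi] at h3
  have : y0 ≠ 0 := by
    rintro rfl
    simp at hy0
  exact mul_ne_zero h1 (mul_ne_zero h2 (pow_ne_zero _ this)) h3

theorem root_of_prod {ι R : Type*} [Fintype ι] [CommRing R] {n : ℕ} {y : ι → R} {t : R}
    (hP : ∏ i, (X - C (y i)) = X ^ n - X + C t) (i : ι) : y i ^ n - y i + t = 0 := by
  have h : (∏ i, (X - C (y i))).eval (y i) = 0 := by
    rw [eval_prod]
    exact Finset.prod_eq_zero (Finset.mem_univ i) (by simp)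
  rw [hP] at h
  simpa using h

theorem exists_eq_of_root {ι R : Type*} [Fintype ι] [CommRing R] [IsDomain R] {n : ℕ}
    {y : ι → R} {t : R}
    (hP : ∏ i, (X - C (y i)) = X ^ n - X + C t) {z : R} (hz : z ^ n - z + t = 0) :
    ∃ i, z = y i := by
  have h : (∏ i, (X - C (y i))).eval z = 0 := by
    rw [hP]; simpa using hz
  rw [eval_prod, Finset.prod_eq_zero_iff] at h
  obtain ⟨i, -, hi⟩ := h
  exact ⟨i, by simpa [sub_eq_zero] using hi⟩

theorem exists_perm_of_gal {K F L ι : Type*} [Field K] [Field F] [Algebra K[X] F] [Field L]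
    [Algebra K[X] L] [Algebra F L] [IsScalarTower K[X] F L] [Fintype ι]
    {n : ℕ} {y : ι → L} (hinj : Function.Injective y)
    (hP : ∏ i, (X - C (y i)) = X ^ n - X + C (algebraMap K[X] L X)) (g : Gal(L/F)) :
    ∃ π : Equiv.Perm ι, ∀ i, g (y i) = y (π i) := by
  have h : ∀ i, ∃ j, g (y i) = y j := fun i => by
    apply exists_eq_of_root hP
    have := congrArg g (root_of_prod hP i)
    simpa [IsScalarTower.algebraMap_apply K[X] F L] using this
  choose π hπ using h
  have hb : Function.Bijective π := by
    rw [← Finite.injective_iff_bijective]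
    intro i j hij
    apply hinj
    apply g.injective
    rw [hπ, hπ, hij]
  exact ⟨Equiv.ofBijective π hb, hπ⟩

section
variable {K : Type*} [Field K] [IsAlgClosed K] {F L : Type*} [Field F] [Algebra K[X] F]
  [IsFractionRing K[X] F] [Field L] [Algebra K[X] L] [Algebra F L] [IsScalarTower K[X] F L]
  [Algebra K L] [IsScalarTower K K[X] L] {ι : Type*} [Fintype ι] [DecidableEq ι]

theorem injective_roots [FaithfulSMul K[X] L] {n : ℕ} (hn : 2 ≤ n) (h1 : (n : K) ≠ 0) {y : ι → L}
    (hP : ∏ i, (X - C (y i)) = X ^ n - X + C (algebraMap K[X] L X)) : Function.Injective y := by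
  intro i j h
  by_contra hij
  have h3 := eval_derivative_prod_of_eq y hij h
  rw [hP] at h3
  simp only [derivative_add, derivative_sub, derivative_X_pow, derivative_X, derivative_C,
    eval_sub, eval_mul, eval_pow, eval_X, eval_one, map_natCast,
    eval_natCast, add_zero] at h3
  refine transcendental_root (K := K) (root_of_prod hP i) ?_
  have : y i ^ (n - 1) = algebraMap K L (n : K)⁻¹ := by
    rw [map_inv₀, map_natCast]
    have : (n : L) ≠ 0 := by
      rw [← map_natCast (algebraMap K L)]; exact (_root_.map_ne_zero _).mpr h1
    field_simp
    linear_combination h3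
  refine IsAlgebraic.of_pow (n := n - 1) (by omega) ?_
  rw [this]
  exact isAlgebraic_algebraMap _

/-- The Galois group contains a transposition of the roots, obtained from an inertia group at a
branch point. The hypothesis `hgen` expresses that `L` is generated by the roots. -/
theorem exists_gal_swap [FiniteDimensional F L] [IsGalois F L] {n : ℕ} (hn : 2 ≤ n)
    (h1 : (n : K) ≠ 0) (h2 : ((n - 1 : ℕ) : K) ≠ 0) {y : ι → L}
    (hP : ∏ i, (X - C (y i)) = X ^ n - X + C (algebraMap K[X] L X))
    (hinj : Function.Injective y)
    (hgen : ∀ g : Gal(L/F), (∀ i, g (y i) = y i) → g = 1) :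
    ∃ (π : Equiv.Perm ι) (g : Gal(L/F)), π.IsSwap ∧ ∀ i, g (y i) = y (π i) := by
  have : FaithfulSMul K[X] L := (faithfulSMul_iff_algebraMap_injective _ _).mpr <| by
    rw [IsScalarTower.algebraMap_eq K[X] F L]
    exact (algebraMap F L).injective.comp (FaithfulSMul.algebraMap_injective _ _)
  obtain ⟨y0, hy0⟩ : ∃ y0 : K, y0 ^ (n - 1) = (n : K)⁻¹ := IsAlgClosed.exists_pow_nat_eq _ (by omega)
  have hy0' : (n : K) * y0 ^ (n - 1) = 1 := by rw [hy0, mul_inv_cancel₀ h1]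
  set b : K := y0 - y0 ^ n with hb
  let B := integralClosure K[X] L
  have hmax : (Ideal.span {X - C b}).IsMaximal :=
    PrincipalIdealRing.isMaximal_of_irreducible (irreducible_X_sub_C b)
  obtain ⟨P, -, hPp, hPc⟩ := Ideal.exists_ideal_over_prime_of_isIntegral
    (S := B) (Ideal.span {X - C b}) ⊥ (by
      rw [← RingHom.ker_eq_comap_bot, (RingHom.injective_iff_ker_eq_bot _).mp
        (FaithfulSMul.algebraMap_injective K[X] B)]
      exact bot_le)
  have hInt : ∀ i, IsIntegral K[X] (y i) := by
    intro i
    refine ⟨X ^ n - X + C X, ?_, ?_⟩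
    · have : (X ^ n - X + C X : K[X][X]) = X ^ n - (X - C X) := by ring
      rw [this]
      exact monic_X_pow_sub (by rw [degree_X_sub_C]; exact_mod_cast hn)
    · simpa using root_of_prod hP i
  let yB : ι → B := fun i => ⟨y i, hInt i⟩
  have hPB : ∏ i, (X - C (yB i)) = X ^ n - X + C (algebraMap K[X] B X) := by
    apply map_injective (algebraMap B L) Subtype.val_injective
    simpa [Polynomial.map_prod] using hP
  let q : B →+* B ⧸ P := Ideal.Quotient.mk P
  let μ : K →+* B ⧸ P := q.comp ((algebraMap K[X] B).comp C)
  have hX : q (algebraMap K[X] B X) = μ b := by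
    have : algebraMap K[X] B (X - C b) ∈ P := by
      rw [← Ideal.mem_comap, hPc]
      exact Ideal.mem_span_singleton_self _
    rw [← Ideal.Quotient.eq_zero_iff_mem, map_sub, map_sub, sub_eq_zero] at this
    exact this
  have hPq : ∏ i, (X - C (q (yB i))) = X ^ n - X + C (μ b) := by
    have := congrArg (Polynomial.map q) hPB
    simpa [Polynomial.map_prod, hX] using this
  have hμ : Function.Injective μ := μ.injective
  obtain ⟨i, j, hij, hi, hj, hcol⟩ := unique_collision hn
    (by rw [← map_natCast μ]; exact (_root_.map_ne_zero _).mpr h1)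
    (by rw [← map_natCast μ]; exact (_root_.map_ne_zero _).mpr h2)
    (fun i => q (yB i)) (μ b) (μ y0) (by simpa using congrArg μ hy0')
    (by rw [hb]; simp) hPq
  -- `T - b` is the value of the trinomial at `y0`; two of its factors `y0 - y l` lie in `P`.
  have hT : algebraMap K[X] B (X - C b) ∈ P ^ 2 := by
    let z0 : B := algebraMap K[X] B (C y0)
    have h3 : algebraMap K[X] B (X - C b) = ∏ i, (z0 - yB i) := by
      have := congrArg (eval z0) hPB
      simp only [eval_prod, eval_sub, eval_X, eval_C, eval_add, eval_pow] at this
      rw [this, hb]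
      simp only [map_sub, map_pow, z0]
      ring
    have hmem : ∀ l, q (yB l) = μ y0 → z0 - yB l ∈ P := by
      intro l hl
      rw [← Ideal.Quotient.eq_zero_iff_mem, map_sub, sub_eq_zero]
      exact hl.symm
    have h4 : (z0 - yB i) * (z0 - yB j) ∣ ∏ i, (z0 - yB i) := by
      rw [← Finset.prod_pair hij (f := fun i => z0 - yB i)]
      exact Finset.prod_dvd_prod_of_subset _ _ _ (Finset.subset_univ _)
    rw [h3]
    refine Ideal.mem_of_dvd _ h4 ?_
    rw [sq]
    exact Ideal.mul_mem_mul (hmem i hi) (hmem j hj)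
  obtain ⟨g, hg1, hg⟩ := exists_inertia_ne_one (F := F) (L := L) b P hT
  obtain ⟨π, hπ⟩ := exists_perm_of_gal hinj hP g
  refine ⟨π, g, ?_, hπ⟩
  have hπ1 : π ≠ 1 := by
    rintro rfl
    exact hg1 (hgen g hπ)
  rw [← Equiv.Perm.card_support_eq_two]
  refine le_antisymm ?_ (Equiv.Perm.two_le_card_support_of_ne_one hπ1)
  rw [← Finset.card_pair hij]
  apply Finset.card_le_card
  intro l hl
  rw [Equiv.Perm.mem_support] at hl
  have : q (yB l) = q (yB (π l)) := by
    obtain ⟨d, hd, h⟩ := hg (yB l)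
    have h5 : yB (π l) = yB l + d := by
      apply Subtype.ext
      exact (hπ l).symm.trans h
    rw [h5, map_add, Ideal.Quotient.eq_zero_iff_mem.mpr hd, add_zero]
  simpa using hcol l (π l) hl.symm this

/-- The Galois group of `Y ^ n - Y + T` over `K(T)` realizes every permutation of the roots. -/
theorem exists_gal_perm [FiniteDimensional F L] [IsGalois F L] {n : ℕ} (hn : 2 ≤ n)
    (h1 : (n : K) ≠ 0) (h2 : ((n - 1 : ℕ) : K) ≠ 0) {y : ι → L}
    (hP : ∏ i, (X - C (y i)) = X ^ n - X + C (algebraMap K[X] L X))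
    (hinj : Function.Injective y)
    (hgen : ∀ g : Gal(L/F), (∀ i, g (y i) = y i) → g = 1) (π : Equiv.Perm ι) :
    ∃ g : Gal(L/F), ∀ i, g (y i) = y (π i) := by
  let G : Subgroup (Equiv.Perm ι) :=
    { carrier := {π | ∃ g : Gal(L/F), ∀ i, g (y i) = y (π i)}
      one_mem' := ⟨1, fun i => rfl⟩
      mul_mem' := by
        rintro a b ⟨g, hg⟩ ⟨h, hh⟩
        exact ⟨g * h, fun i => by rw [AlgEquiv.mul_apply, hh, hg]; rfl⟩
      inv_mem' := by
        rintro a ⟨g, hg⟩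
        refine ⟨g⁻¹, fun i => ?_⟩
        have := hg (a⁻¹ i)
        rw [show a (a⁻¹ i) = i from a.apply_symm_apply i] at this
        rw [← this]
        exact g.symm_apply_apply _ }
  obtain ⟨s, g, hs, hg⟩ := exists_gal_swap (F := F) hn h1 h2 hP hinj hgen
  have hG : MulAction.IsPreprimitive G ι := by
    apply MulAction.isPreprimitive_of_is_two_pretransitive
    rw [MulAction.is_two_pretransitive_iff]
    intro a b c d hab hcd
    obtain ⟨g, hg1, hg2⟩ := exists_gal_pair (F := F) hn h1 (hinj.ne hab) (hinj.ne hcd)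
      (root_of_prod hP a) (root_of_prod hP b) (root_of_prod hP c) (root_of_prod hP d)
    obtain ⟨π, hπ⟩ := exists_perm_of_gal hinj hP g
    exact ⟨⟨π, g, hπ⟩, hinj ((hπ a).symm.trans hg1), hinj ((hπ b).symm.trans hg2)⟩
  have := Equiv.Perm.subgroup_eq_top_of_isPreprimitive_of_isSwap_mem hG s hs ⟨g, hg⟩
  have h3 : π ∈ G := this ▸ Subgroup.mem_top π
  exact h3
end

/-! ### The resolvent and symmetric functions -/

/-- A symmetric polynomial evaluated at the roots of `f` is a polynomial expression in the
coefficients of `f`, uniformly in the ring `B` over which `f` is split. -/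
theorem exists_specialization_symm.{v} {ι A R : Type*} [Fintype ι] [CommRing A] [CommRing R]
    [Algebra A R] (p : MvPolynomial ι A) (hp : p.IsSymmetric) (f : R[X]) :
    ∃ r : R, ∀ (B : Type v) [CommRing B] (ψ : R →+* B) (y : ι → B),
      ∏ i, (X - C (y i)) = f.map ψ → p.eval₂ (ψ.comp (algebraMap A R)) y = ψ r := by
  classical
  obtain ⟨q, hq⟩ := MvPolynomial.esymmAlgHom_surjective A (le_refl (Fintype.card ι)) ⟨p, hp⟩
  refine ⟨MvPolynomial.aeval (fun i : Fin (Fintype.card ι) =>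
    (-1) ^ (i + 1 : ℕ) * f.coeff (Fintype.card ι - (i + 1))) q, fun B _ ψ y h => ?_⟩
  have hp' : p = MvPolynomial.aeval
      (fun i : Fin (Fintype.card ι) => MvPolynomial.esymm ι A (i + 1)) q := by
    rw [← MvPolynomial.esymmAlgHom_apply, hq]
  let : Algebra A B := (ψ.comp (algebraMap A R)).toAlgebra
  let ψA : R →ₐ[A] B := { ψ with commutes' := fun a => rfl }
  have e1 : p.eval₂ (ψ.comp (algebraMap A R)) y = MvPolynomial.aeval y p := rfl
  change _ = ψA _
  rw [e1, hp', ← AlgHom.comp_apply, ← AlgHom.comp_apply]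
  congr 1
  ext i
  simp only [AlgHom.comp_apply, MvPolynomial.aeval_X]
  change _ = ψ _
  have h2 : f.map ψ = ((Finset.univ.val.map y).map fun t => X - C t).prod := by
    rw [← h, Multiset.map_map]; rfl
  rw [map_mul, ← coeff_map, h2, Multiset.prod_X_sub_C_coeff _ (by simp),
    MvPolynomial.aeval_esymm_eq_multiset_esymm]
  have h3 : (Finset.univ.val.map y).card - (Fintype.card ι - (i + 1)) = i + 1 := by
    have := i.2
    simp
    omega
  rw [h3, map_pow, map_neg, map_one, ← mul_assoc, ← mul_pow]
  simp

theorem exists_specialization_symm_poly.{v} {ι A R : Type*} [Fintype ι] [CommRing A] [CommRing R]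
    [Algebra A R] (p : (MvPolynomial ι A)[X]) (hp : ∀ m, (p.coeff m).IsSymmetric) (f : R[X]) :
    ∃ r : R[X], ∀ (B : Type v) [CommRing B] (ψ : R →+* B) (y : ι → B),
      ∏ i, (X - C (y i)) = f.map ψ →
        p.map (MvPolynomial.eval₂Hom (ψ.comp (algebraMap A R)) y) = r.map ψ := by
  choose r hr using fun m => exists_specialization_symm.{v} (p.coeff m) (hp m) f
  refine ⟨∑ m ∈ p.support, monomial m (r m), fun B _ ψ y h => ?_⟩
  conv_lhs => rw [p.as_sum_support]
  simp only [Polynomial.map_sum, map_monomial]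
  refine Finset.sum_congr rfl fun m _ => ?_
  rw [← hr m B ψ y h]
  rfl

/-- The resolvent `∏_π (W - ∑_j lam_j y_{π j})` is defined over `R` as soon as the `lam_j` are the
roots of a polynomial over `k` and the `y_j` those of a polynomial over `R`. The polynomial `G` does
not depend on the target `B`, so that it may be specialized. -/
theorem exists_resolvent.{v} {k Ω R ι : Type*} [Field k] [Field Ω] [Algebra k Ω] [CommRing R]
    [Algebra k R] [Fintype ι] [DecidableEq ι] (lam : ι → Ω) (m : k[X])
    (hm : ∏ i, (X - C (lam i)) = m.map (algebraMap k Ω)) (f : R[X]) :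
    ∃ G : R[X], ∀ (B : Type v) [CommRing B] (ψ : R →+* B) (μ : Ω →+* B) (y : ι → B),
      ψ.comp (algebraMap k R) = μ.comp (algebraMap k Ω) →
      ∏ i, (X - C (y i)) = f.map ψ →
      G.map ψ = ∏ π : Equiv.Perm ι, (X - C (∑ j, μ (lam j) * y (π j))) := by
  -- The `y j` are the variables of the coefficient ring `U`, and the `lam j` the outer variables.
  let U := MvPolynomial ι k
  let p : (MvPolynomial ι U)[X] := ∏ π : Equiv.Perm ι,
    (X - C (∑ j, MvPolynomial.X j * MvPolynomial.C (MvPolynomial.X (π j))))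
  have hp : ∀ l, (p.coeff l).IsSymmetric := by
    intro l e
    have : p.map (MvPolynomial.rename e : MvPolynomial ι U →ₐ[U] _).toRingHom = p := by
      simp only [p, Polynomial.map_prod, Polynomial.map_sub, Polynomial.map_X, Polynomial.map_C]
      refine Fintype.prod_equiv (Equiv.mulRight e⁻¹) _ _ fun π => ?_
      congr 2
      simp only [map_sum, map_mul, AlgHom.toRingHom_eq_coe, RingHom.coe_coe,
        MvPolynomial.rename_X, MvPolynomial.rename_C]
      refine Fintype.sum_equiv e _ _ fun j => ?_
      simp
    conv_rhs => rw [← this]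
    rw [coeff_map]
    rfl
  obtain ⟨r1, hr1⟩ := exists_specialization_symm_poly p hp (m.map (algebraMap k U))
  specialize hr1 (MvPolynomial ι Ω) (MvPolynomial.map (algebraMap k Ω))
    (fun j => MvPolynomial.C (lam j)) (by
      rw [Polynomial.map_map]
      have h : (MvPolynomial.map (algebraMap k Ω)).comp (algebraMap k U) =
        (MvPolynomial.C (σ := ι)).comp (algebraMap k Ω) := by
        ext; simp [U, MvPolynomial.algebraMap_eq]
      rw [h, ← Polynomial.map_map, ← hm]
      simp [Polynomial.map_prod])
  have hG : r1.map (MvPolynomial.map (algebraMap k Ω)) = ∏ π : Equiv.Perm ι,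
      (X - C (∑ j, MvPolynomial.C (lam j) * MvPolynomial.X (π j))) := by
    rw [← hr1]
    simp [p, Polynomial.map_prod, Polynomial.map_sum, U]
  have hs : ∀ l, (r1.coeff l).IsSymmetric := by
    intro l e
    apply MvPolynomial.map_injective (algebraMap k Ω) (algebraMap k Ω).injective
    rw [MvPolynomial.map_rename, ← coeff_map, hG]
    have : (∏ π : Equiv.Perm ι,
      (X - C (∑ j, MvPolynomial.C (lam j) * MvPolynomial.X (π j)))).map
        (MvPolynomial.rename e : MvPolynomial ι Ω →ₐ[Ω] _).toRingHom = ∏ π : Equiv.Perm ι,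
      (X - C (∑ j, MvPolynomial.C (lam j) * MvPolynomial.X (π j))) := by
      simp only [Polynomial.map_prod, Polynomial.map_sub, Polynomial.map_X, Polynomial.map_C]
      refine Fintype.prod_equiv (Equiv.mulLeft e) _ _ fun π => ?_
      congr 2
      simp
    conv_rhs => rw [← this]
    rw [coeff_map]
    rfl
  obtain ⟨G, hG'⟩ := exists_specialization_symm_poly.{v} r1 hs f
  refine ⟨G, fun B _ ψ μ y hc h => ?_⟩
  rw [← hG' B ψ y h, hc]
  have h2 : MvPolynomial.eval₂Hom (μ.comp (algebraMap k Ω)) y =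
      (MvPolynomial.eval₂Hom μ y).comp (MvPolynomial.map (algebraMap k Ω)) := by
    ext <;> simp
  rw [h2, ← Polynomial.map_map, hG]
  simp [Polynomial.map_prod, Polynomial.map_sum]

/-! ### Absolute irreducibility of the resolvent -/

theorem exists_prod_X_sub_C_eq {K ι : Type*} [Field K] [Fintype ι] {P : K[X]} (hP : P.Monic)
    (hs : P.Splits) (hd : P.natDegree = Fintype.card ι) :
    ∃ z : ι → K, ∏ i, (X - C (z i)) = P := by
  have hc : P.roots.toList.length = Fintype.card ι := by
    rw [Multiset.length_toList, ← hd, hs.natDegree_eq_card_roots]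
  let e : ι ≃ Fin P.roots.toList.length := Fintype.equivFinOfCardEq hc.symm
  refine ⟨fun i => P.roots.toList.get (e i), ?_⟩
  rw [e.prod_comp fun j => (X - C (P.roots.toList.get j))]
  have := hs.eq_prod_roots_of_monic hP
  rw [← Multiset.coe_toList P.roots, Multiset.map_coe, Multiset.prod_coe] at this
  exact (Fin.prod_univ_fun_getElem P.roots.toList fun x => X - C x).trans this.symm

theorem prod_X_sub_C_eq_of_injective {K ι : Type*} [Field K] [Fintype ι] {P : K[X]} (hP : P.Monic)
    (hd : P.natDegree ≤ Fintype.card ι) {z : ι → K} (hz : Function.Injective z)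
    (hr : ∀ i, P.eval (z i) = 0) : ∏ i, (X - C (z i)) = P := by
  symm
  refine eq_of_monic_of_dvd_of_natDegree_le (monic_prod_of_monic _ _ fun i _ => monic_X_sub_C _)
    hP ?_ ?_
  · refine Finset.prod_dvd_of_coprime ?_ fun i _ => dvd_iff_isRoot.mpr (hr i)
    exact fun i _ j _ hij => pairwise_coprime_X_sub_C hz hij
  · rw [natDegree_prod_of_monic _ _ fun i _ => monic_X_sub_C _]
    simpa using hd

/-- If two of the `a i`, or two of the `z i`, were equal, the transposition exchanging their indices
would give the same sum as the identity. -/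
theorem injective_of_perm_sums {ι K : Type*} [Fintype ι] [DecidableEq ι] [Field K] {a z : ι → K}
    (h : Function.Injective fun π : Equiv.Perm ι => ∑ i, a i * z (π i)) :
    Function.Injective a ∧ Function.Injective z := by
  constructor
  · intro i j hij
    by_contra hne
    have : Equiv.swap i j = 1 := by
      apply h
      refine Fintype.sum_equiv (Equiv.swap i j) _ _ fun l => ?_
      have : a (Equiv.swap i j l) = a l := by
        rcases eq_or_ne l i with rfl | h1
        · rw [Equiv.swap_apply_left, hij]
        rcases eq_or_ne l j with rfl | h2
        · rw [Equiv.swap_apply_right, hij]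
        rw [Equiv.swap_apply_of_ne_of_ne h1 h2]
      simp [this]
    exact hne (Equiv.swap_eq_one_iff.mp this)
  · intro i j hij
    by_contra hne
    have : Equiv.swap i j = 1 := by
      apply h
      refine Finset.sum_congr rfl fun l _ => ?_
      have : z (Equiv.swap i j l) = z l := by
        rcases eq_or_ne l i with rfl | h1
        · rw [Equiv.swap_apply_left, hij]
        rcases eq_or_ne l j with rfl | h2
        · rw [Equiv.swap_apply_right, hij]
        rw [Equiv.swap_apply_of_ne_of_ne h1 h2]
      simp [this]
    exact hne (Equiv.swap_eq_one_iff.mp this)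

/-- For distinct `y σ`, some `a : E` makes all the sums `∑ σ, σ a * y (π σ)` distinct. Each equality
of two sums defines a `k`-subspace of `E`, proper by linear independence of the embeddings, and a
vector space over an infinite field is not a finite union of proper subspaces. -/
theorem exists_separating {k E Ω L : Type*} [Field k] [Infinite k] [Field E] [Algebra k E]
    [Field Ω] [Algebra k Ω] [Field L] [Fintype (E →ₐ[k] Ω)] (μ : Ω →+* L)
    {y : (E →ₐ[k] Ω) → L} (hy : Function.Injective y) :
    ∃ a : E, Function.Injective
      fun π : Equiv.Perm (E →ₐ[k] Ω) => ∑ σ, μ (σ a) * y (π σ) := by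
  classical
  let V : Equiv.Perm (E →ₐ[k] Ω) × Equiv.Perm (E →ₐ[k] Ω) → Subspace k E := fun π =>
    { carrier := {a | ∑ σ, μ (σ a) * (y (π.1 σ) - y (π.2 σ)) = 0}
      zero_mem' := by simp
      add_mem' := by
        intro a b ha hb
        simp only [Set.mem_ofPred_eq] at ha hb ⊢
        simp only [map_add, add_mul, Finset.sum_add_distrib, ha, hb, add_zero]
      smul_mem' := by
        intro c a ha
        simp only [Set.mem_ofPred_eq] at ha ⊢
        simp only [Algebra.smul_def, map_mul, AlgHom.commutes, mul_assoc, ← Finset.mul_sum, ha,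
          mul_zero] }
  let s : Finset (Subspace k E) := Finset.univ.offDiag.image V
  have hs : ⊤ ∉ s := by
    intro h
    obtain ⟨⟨π, π'⟩, hπ, hV⟩ := Finset.mem_image.mp h
    refine (Finset.mem_offDiag.mp hπ).2.2 ?_
    let χ : (E →ₐ[k] Ω) → (E →* L) := fun σ => (μ : Ω →* L).comp (σ : E →* Ω)
    have hχ : Function.Injective χ := by
      intro σ τ h
      ext a
      exact μ.injective (DFunLike.congr_fun h a)
    have hli := (linearIndependent_monoidHom E L).comp χ hχ
    rw [Fintype.linearIndependent_iff] at hli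
    have := hli (fun σ => y (π σ) - y (π' σ)) (by
      ext a
      have ha : a ∈ V (π, π') := hV ▸ Submodule.mem_top
      have ha' : ∑ σ, μ (σ a) * (y (π σ) - y (π' σ)) = 0 := ha
      simpa [χ, mul_comm] using ha')
    ext1 σ
    exact hy (sub_eq_zero.mp (this σ))
  have := Subspace.biUnion_ne_univ_of_top_notMem hs
  rw [Set.ne_univ_iff_exists_notMem] at this
  obtain ⟨a, ha⟩ := this
  refine ⟨a, fun π π' h => ?_⟩
  by_contra hne
  apply ha
  simp only [Set.mem_iUnion]
  refine ⟨V (π, π'), Finset.mem_image.mpr ⟨(π, π'), by simpa using hne, rfl⟩, ?_⟩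
  change ∑ σ, μ (σ a) * (y (π σ) - y (π' σ)) = 0
  simp only [mul_sub, Finset.sum_sub_distrib]
  exact sub_eq_zero.mpr h

section
variable {K : Type*} [Field K] [IsAlgClosed K] {F L : Type*} [Field F] [Algebra K[X] F]
  [IsFractionRing K[X] F] [Field L] [Algebra K[X] L] [Algebra F L] [IsScalarTower K[X] F L]
  [Algebra K L] [IsScalarTower K K[X] L] {ι : Type*} [Fintype ι] [DecidableEq ι]

/-- The resolvent is irreducible over the algebraically closed field `K`: its roots are distinct and
form a single Galois orbit. -/
theorem irreducible_resolvent [FiniteDimensional F L] [IsGalois F L] {n : ℕ} (hn : 2 ≤ n)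
    (h1 : (n : K) ≠ 0) (h2 : ((n - 1 : ℕ) : K) ≠ 0) {y : ι → L}
    (hP : ∏ i, (X - C (y i)) = X ^ n - X + C (algebraMap K[X] L X))
    (hinj : Function.Injective y)
    (hgen : ∀ g : Gal(L/F), (∀ i, g (y i) = y i) → g = 1) (lam : ι → K)
    (hw : Function.Injective
      fun π : Equiv.Perm ι => ∑ i, algebraMap K L (lam i) * y (π i)) (G : K[X][X])
    (hG : G.map (algebraMap K[X] L) =
      ∏ π : Equiv.Perm ι, (X - C (∑ i, algebraMap K L (lam i) * y (π i)))) :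
    G.Monic ∧ Irreducible G ∧ (G.map (algebraMap K[X] F)).Separable := by
  have hi : Function.Injective (algebraMap K[X] L) := by
    rw [IsScalarTower.algebraMap_eq K[X] F L]
    exact (algebraMap F L).injective.comp (FaithfulSMul.algebraMap_injective _ _)
  set w : Equiv.Perm ι → L := fun π => ∑ i, algebraMap K L (lam i) * y (π i) with hwdef
  have hGm : G.Monic := by
    apply monic_of_injective hi
    rw [hG]
    exact monic_prod_of_monic _ _ fun i _ => monic_X_sub_C _
  have hGF : (G.map (algebraMap K[X] F)).map (algebraMap F L) = ∏ π, (X - C (w π)) := by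
    rw [Polynomial.map_map, ← IsScalarTower.algebraMap_eq K[X] F L, hG]
  refine ⟨hGm, ?_, ?_⟩
  · rw [hGm.irreducible_iff_irreducible_map_fraction_map (K := F)]
    have hInt : IsIntegral F (w 1) := Algebra.IsIntegral.isIntegral _
    have heq : G.map (algebraMap K[X] F) = minpoly F (w 1) := by
      apply eq_of_monic_of_dvd_of_natDegree_le (minpoly.monic hInt) (hGm.map _)
      · apply minpoly.dvd
        rw [← eval_map_algebraMap, hGF, eval_prod]
        exact Finset.prod_eq_zero (Finset.mem_univ 1) (by simp)
      · rw [← natDegree_map (algebraMap F L), hGF,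
          ← natDegree_map (p := minpoly F (w 1)) (algebraMap F L)]
        apply natDegree_le_of_dvd _ (map_ne_zero (minpoly.ne_zero hInt))
        refine Finset.prod_dvd_of_coprime (fun i _ j _ hij => pairwise_coprime_X_sub_C hw hij)
          fun π _ => dvd_iff_isRoot.mpr ?_
        obtain ⟨g, hg⟩ := exists_gal_perm (F := F) hn h1 h2 hP hinj hgen π
        have hgw : w π = g (w 1) := by
          simp only [hwdef, map_sum, map_mul, Equiv.Perm.one_apply, hg]
          refine Finset.sum_congr rfl fun i _ => ?_
          congr 1
          rw [IsScalarTower.algebraMap_apply K K[X] L, IsScalarTower.algebraMap_apply K[X] F L,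
            AlgEquiv.commutes]
        rw [IsRoot, eval_map_algebraMap, hgw, aeval_algHom_apply, minpoly.aeval, map_zero]
    rw [heq]
    exact minpoly.irreducible hInt
  · rw [← separable_map (algebraMap F L), hGF]
    exact separable_prod_X_sub_C_iff.mpr hw
end

/-- If `G` is separable over the fraction field of `R`, then it stays separable under every
specialization outside the zero locus of some nonzero `d`: clear denominators in a Bézout identity
for `G` and its derivative. -/
theorem exists_discr {R F : Type*} [CommRing R] [IsDomain R] [Field F] [Algebra R F]
    [IsFractionRing R F] (G : R[X]) (hG : (G.map (algebraMap R F)).Separable) :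
    ∃ d : R, d ≠ 0 ∧ ∀ {K : Type*} [Field K] (ψ : R →+* K), ψ d ≠ 0 → (G.map ψ).Separable := by
  obtain ⟨a, b, hab⟩ := hG
  obtain ⟨c, hcm, hc⟩ := IsLocalization.integerNormalization_spec (nonZeroDivisors R) a
  obtain ⟨c', hcm', hc'⟩ := IsLocalization.integerNormalization_spec (nonZeroDivisors R) b
  set a' := IsLocalization.integerNormalization (nonZeroDivisors R) a
  set b' := IsLocalization.integerNormalization (nonZeroDivisors R) b
  have key : C c' * a' * G + C c * b' * derivative G = C (c * c') := by
    apply map_injective _ (IsFractionRing.injective R F)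
    simp only [Polynomial.map_add, Polynomial.map_mul, hc, hc', Polynomial.map_C,
      ← derivative_map, Algebra.smul_def, map_mul, Polynomial.algebraMap_apply]
    linear_combination (C (algebraMap R F c) * C (algebraMap R F c')) * hab
  refine ⟨c * c', mul_ne_zero (nonZeroDivisors.ne_zero hcm) (nonZeroDivisors.ne_zero hcm'),
    fun {K} _ ψ h => ?_⟩
  have := congrArg (Polynomial.map ψ) key
  simp only [Polynomial.map_add, Polynomial.map_mul, Polynomial.map_C, ← derivative_map] at this
  refine ⟨C (ψ (c * c'))⁻¹ * (C (ψ c') * a'.map ψ), C (ψ (c * c'))⁻¹ * (C (ψ c) * b'.map ψ), ?_⟩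
  have h3 : C (ψ (c * c'))⁻¹ * C (ψ (c * c')) = 1 := by
    rw [← C_mul, inv_mul_cancel₀ h, C_1]
  linear_combination C (ψ (c * c'))⁻¹ * this + h3

/-! ### Descent of a root to the extension -/

theorem isSeparable_of_finrank {k E : Type*} [Field k] [Field E] [Algebra k E]
    [FiniteDimensional k E] (h : (Module.finrank k E : k) ≠ 0) : Algebra.IsSeparable k E := by
  refine ⟨fun x => ?_⟩
  have hInt : IsIntegral k x := Algebra.IsIntegral.isIntegral x
  rw [IsSeparable, separable_iff_derivative_ne_zero (minpoly.irreducible hInt)]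
  have hd : (minpoly k x).natDegree ∣ Module.finrank k E := minpoly.degree_dvd hInt
  have hpos := minpoly.natDegree_pos hInt
  intro h0
  have := congrArg (fun p => coeff p ((minpoly k x).natDegree - 1)) h0
  simp only [coeff_derivative, coeff_zero] at this
  rw [Nat.sub_add_cancel hpos, (minpoly.monic hInt).coeff_natDegree, one_mul, ← Nat.cast_add_one,
    Nat.sub_add_cancel hpos] at this
  obtain ⟨c, hc⟩ := hd
  apply h
  rw [hc, Nat.cast_mul, this, zero_mul]

/-- A numbering `z` of the roots of `P` by the embeddings of `E`, for which `∑ σ, σ a * z σ` lies in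
`k`, is compatible with the Galois action when all the renumbered sums are distinct; it then comes
from an element `x` of `E`, with `σ x = z σ`, which is a primitive element. -/
theorem exists_generator {k E Ω : Type*} [Field k] [Field E] [Algebra k E] [FiniteDimensional k E]
    [Algebra.IsSeparable k E] [Field Ω] [Algebra k Ω] [IsAlgClosed Ω] [Normal k Ω]
    [Fintype (E →ₐ[k] Ω)]
    [DecidableEq (E →ₐ[k] Ω)] (a : E) (z : (E →ₐ[k] Ω) → Ω) (P : k[X])
    (hz : ∏ σ, (X - C (z σ)) = P.map (algebraMap k Ω))
    (hinj : Function.Injective fun π : Equiv.Perm (E →ₐ[k] Ω) => ∑ σ, σ a * z (π σ)) (w : k)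
    (hw : algebraMap k Ω w = ∑ σ, σ a * z σ) :
    ∃ x : E, aeval x P = 0 ∧ IntermediateField.adjoin k {x} = ⊤ := by
  have hzi : Function.Injective z :=
    (injective_of_perm_sums (a := fun σ : E →ₐ[k] Ω => σ a) hinj).2
  have hroot : ∀ σ, aeval (z σ) P = 0 := by
    intro σ
    rw [← eval_map_algebraMap, ← hz, eval_prod]
    exact Finset.prod_eq_zero (Finset.mem_univ σ) (by simp)
  have hroot' : ∀ u : Ω, aeval u P = 0 → ∃ σ, u = z σ := by
    intro u hu
    rw [← eval_map_algebraMap, ← hz, eval_prod, Finset.prod_eq_zero_iff] at hu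
    obtain ⟨σ, -, h⟩ := hu
    exact ⟨σ, by simpa [sub_eq_zero] using h⟩
  have hgal : ∀ (γ : Ω ≃ₐ[k] Ω) (σ : E →ₐ[k] Ω), γ (z σ) = z (γ.toAlgHom.comp σ) := by
    intro γ
    have h : ∀ σ, ∃ τ, γ (z σ) = z τ := fun σ => hroot' _ (by
      have := congrArg γ (hroot σ)
      rwa [← aeval_algHom_apply, map_zero] at this)
    choose ρ hρ using h
    have hb : Function.Bijective ρ := by
      rw [← Finite.injective_iff_bijective]
      intro i j hij
      apply hzi
      apply γ.injective
      rw [hρ, hρ, hij]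
    let ρ' : Equiv.Perm (E →ₐ[k] Ω) := Equiv.ofBijective ρ hb
    let δ : Equiv.Perm (E →ₐ[k] Ω) :=
      { toFun := fun σ => γ.toAlgHom.comp σ
        invFun := fun σ => γ.symm.toAlgHom.comp σ
        left_inv := fun σ => by ext; simp
        right_inv := fun σ => by ext; simp }
    -- As `γ` fixes `w`, the sum belonging to the renumbering by `ρ` and `δ` is `w` again.
    have key : ρ' * δ⁻¹ = 1 := by
      apply hinj
      simp only [Equiv.Perm.one_apply]
      rw [← hw, ← γ.commutes w, hw, map_sum]
      symm
      refine Fintype.sum_equiv δ _ _ fun σ => ?_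
      have h1 : (ρ' * δ⁻¹) (δ σ) = ρ σ := congrArg ρ (δ.symm_apply_apply σ)
      rw [map_mul, hρ, h1]
      rfl
    have key' : ρ' = δ := mul_inv_eq_one.mp key
    intro σ
    rw [hρ]
    exact congrArg z (DFunLike.congr_fun key' σ)
  -- The root `z σ0` is fixed by the automorphisms of `Ω` over `σ0 E`, hence lies in `σ0 E`.
  obtain ⟨σ0⟩ : Nonempty (E →ₐ[k] Ω) := ⟨IsAlgClosed.lift⟩
  let : Algebra E Ω := σ0.toRingHom.toAlgebra
  have htow : IsScalarTower k E Ω := IsScalarTower.of_algebraMap_eq fun c => (σ0.commutes c).symm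
  have hnorm : Normal E Ω := Normal.tower_top_of_normal k E Ω
  have hPs : P.Separable := by
    rw [← separable_map (algebraMap k Ω), ← hz]
    exact separable_prod_X_sub_C_iff.mpr hzi
  have hsep : IsSeparable E (z σ0) := by
    have : IsSeparable k (z σ0) := hPs.of_dvd (minpoly.dvd _ _ (hroot σ0))
    exact this.tower_top E
  have hmem : z σ0 ∈ (⊥ : Subalgebra E Ω) := by
    by_contra hn
    rw [notMem_iff_exists_ne_and_isConjRoot hsep (IsAlgClosed.splits _)] at hn
    obtain ⟨u, hne, hconj⟩ := hn
    obtain ⟨γ, hγ⟩ := isConjRoot_iff_exists_algEquiv.mp hconj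
    apply hne
    have h := hgal (γ.restrictScalars k) σ0
    have h' : (γ.restrictScalars k).toAlgHom.comp σ0 = σ0 := by
      ext c
      exact γ.commutes c
    rw [h'] at h
    exact γ.injective (h.trans hγ.symm)
  obtain ⟨x, hx⟩ := Algebra.mem_bot.mp hmem
  have hx0 : σ0 x = z σ0 := hx
  have hx' : ∀ φ : E →ₐ[k] Ω, φ x = z φ := by
    intro φ
    let τ : Ω →ₐ[k] Ω := φ.liftNormal Ω
    have hτ : ∀ c : E, τ (σ0 c) = φ c := fun c => AlgHom.liftNormal_commutes φ Ω c
    have hb : Function.Bijective τ := Algebra.IsAlgebraic.algHom_bijective τ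
    have h := hgal (AlgEquiv.ofBijective τ hb) σ0
    have h' : (AlgEquiv.ofBijective τ hb).toAlgHom.comp σ0 = φ := by
      ext c
      exact hτ c
    rw [h'] at h
    rw [← h, ← hx0]
    exact (hτ x).symm
  refine ⟨x, ?_, ?_⟩
  · have h : σ0 (aeval x P) = 0 := by rw [← aeval_algHom_apply, hx0, hroot]
    exact (map_eq_zero σ0).mp h
  · rw [Field.primitive_element_iff_algHom_eq_of_eval' k Ω fun _ => IsAlgClosed.splits _]
    intro φ ψ h
    apply hzi
    rw [← hx', ← hx']
    exact h

/-! ### Rational zeros over PAC fields -/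

theorem IsPAC.infinite {k : Type*} [Field k] (h : IsPAC k) : Infinite k := by
  have h1 := h (MvPolynomial.X 0) (by
    rw [MvPolynomial.map_X]; exact MvPolynomial.X_prime.irreducible)
  by_contra hk
  rw [not_infinite_iff_finite] at hk
  exact h1 (Set.toFinite _)

theorem map_equivMvPolynomial {k K : Type*} [Field k] [Field K] [Algebra k K] (G : k[X][X]) :
    MvPolynomial.map (algebraMap k K) (Bivariate.equivMvPolynomial k G) =
      Bivariate.equivMvPolynomial K (G.map (mapRingHom (algebraMap k K))) := by
  have : (MvPolynomial.map (algebraMap k K)).comp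
      (Bivariate.equivMvPolynomial k : k[X][X] →+* MvPolynomial (Fin 2) k) =
      (Bivariate.equivMvPolynomial K : K[X][X] →+* MvPolynomial (Fin 2) K).comp
        (mapRingHom (mapRingHom (algebraMap k K))) := by
    ext <;> simp
  exact RingHom.congr_fun this G

theorem eval_equivMvPolynomial {k : Type*} [Field k] (G : k[X][X]) (t w : k) :
    MvPolynomial.eval ![t, w] (Bivariate.equivMvPolynomial k G) =
      (G.map (evalRingHom t)).eval w := by
  have : (MvPolynomial.eval ![t, w]).comp
      (Bivariate.equivMvPolynomial k : k[X][X] →+* MvPolynomial (Fin 2) k) =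
      (evalRingHom w).comp (mapRingHom (evalRingHom t)) := by
    ext <;> simp
  exact RingHom.congr_fun this G

/-- Over a PAC field an absolutely irreducible polynomial that is monic in the second variable has a
rational zero whose first coordinate avoids the zeros of a given `d ≠ 0`, since only finitely many
zeros lie above those. -/
theorem IsPAC.exists_zero {k : Type*} [Field k] (h : IsPAC k) (G : k[X][X]) (hm : G.Monic)
    (hG : Irreducible (G.map (mapRingHom (algebraMap k (AlgebraicClosure k)))))
    (d : (AlgebraicClosure k)[X]) (hd : d ≠ 0) :
    ∃ t w : k, (G.map (evalRingHom t)).eval w = 0 ∧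
      d.eval (algebraMap k (AlgebraicClosure k) t) ≠ 0 := by
  have h1 := h (Bivariate.equivMvPolynomial k G) (by
    rw [map_equivMvPolynomial]
    exact (MulEquiv.irreducible_iff _).mpr hG)
  by_contra! hcon
  apply h1
  have hfin : {t : k | d.eval (algebraMap k (AlgebraicClosure k) t) = 0}.Finite :=
    (d.finite_setOfPred_isRoot hd).preimage (algebraMap k (AlgebraicClosure k)).injective.injOn
  have hfin2 : (⋃ t ∈ {t : k | d.eval (algebraMap k (AlgebraicClosure k) t) = 0},
      Set.image (Prod.mk t) {w | (G.map (evalRingHom t)).eval w = 0}).Finite := by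
    refine hfin.biUnion fun t _ => Set.Finite.image _ ?_
    exact finite_setOfPred_isRoot (hm.map (evalRingHom t)).ne_zero
  refine hfin2.subset ?_
  rintro ⟨t, w⟩ htw
  have htw' : (G.map (evalRingHom t)).eval w = 0 := by
    rw [← eval_equivMvPolynomial]; exact htw
  simp only [Set.mem_iUnion]
  exact ⟨t, hcon t w htw', w, htw', rfl⟩

theorem trinomial_monic {R : Type*} [CommRing R] [Nontrivial R] {n : ℕ} (hn : 2 ≤ n) (t : R) :
    (X ^ n - X + C t : R[X]).Monic ∧ (X ^ n - X + C t : R[X]).natDegree = n := by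
  have : (X ^ n - X + C t : R[X]) = X ^ n - (X - C t) := by ring
  rw [this]
  have h : (X - C t).degree < (n : WithBot ℕ) := by rw [degree_X_sub_C]; exact_mod_cast hn
  refine ⟨monic_X_pow_sub h, ?_⟩
  rw [natDegree_sub_eq_left_of_natDegree_lt, natDegree_X_pow]
  rw [natDegree_X_sub_C, natDegree_X_pow]
  omega

theorem stmt_0 (k E : Type*) [Field k] [Field E] [Algebra k E]
    (hPAC : IsPAC k) (n : ℕ) (hn : 2 ≤ n)
    (hchar : IsUnit ((n * (n - 1) : ℕ) : k))
    (hdeg : Module.finrank k E = n) :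
    ∃ b : k, Irreducible (X ^ n - X + C b) ∧
      ∃ x : E, Polynomial.aeval x (X ^ n - X + C b) = 0 ∧
        IntermediateField.adjoin k {x} = ⊤ := by
  classical
  have hinf := hPAC.infinite
  have hfd : FiniteDimensional k E := Module.finite_of_finrank_pos (by omega)
  have hne := hchar.ne_zero
  rw [Nat.cast_mul, mul_ne_zero_iff] at hne
  have hsepE : Algebra.IsSeparable k E := isSeparable_of_finrank (by rw [hdeg]; exact hne.1)
  let K := AlgebraicClosure k
  let ι := E →ₐ[k] K
  have hcard : Fintype.card ι = n := (AlgHom.card k E K).trans hdeg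
  have h1 : (n : K) ≠ 0 := by
    rw [← map_natCast (algebraMap k K)]; exact (_root_.map_ne_zero _).mpr hne.1
  have h2 : ((n - 1 : ℕ) : K) ≠ 0 := by
    rw [← map_natCast (algebraMap k K)]; exact (_root_.map_ne_zero _).mpr hne.2
  let F := FractionRing K[X]
  let fF : F[X] := X ^ n - X + C (algebraMap K[X] F X)
  let L := fF.SplittingField
  have : IsScalarTower K K[X] L := IsScalarTower.of_algebraMap_eq fun c => by
    rw [IsScalarTower.algebraMap_apply K[X] F L, ← IsScalarTower.algebraMap_apply K K[X] F,
      ← IsScalarTower.algebraMap_apply K F L]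
  obtain ⟨hLm, hLd⟩ := trinomial_monic hn (algebraMap K[X] L X)
  have hmap : fF.map (algebraMap F L) = X ^ n - X + C (algebraMap K[X] L X) := by
    simp [fF, ← IsScalarTower.algebraMap_apply]
  obtain ⟨y, hy⟩ := exists_prod_X_sub_C_eq (ι := ι) hLm
    (by rw [← hmap]; exact SplittingField.splits fF) (hLd.trans hcard.symm)
  have hFS : FaithfulSMul K[X] L := (faithfulSMul_iff_algebraMap_injective _ _).mpr <| by
    rw [IsScalarTower.algebraMap_eq K[X] F L]
    exact (algebraMap F L).injective.comp (FaithfulSMul.algebraMap_injective _ _)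
  have hyi : Function.Injective y := injective_roots hn h1 hy
  have hfs : fF.Separable := by
    rw [← separable_map (algebraMap F L), hmap, ← hy]
    exact separable_prod_X_sub_C_iff.mpr hyi
  have hgal : IsGalois F L := IsGalois.of_separable_splitting_field hfs
  have hgen : ∀ g : Gal(L/F), (∀ i, g (y i) = y i) → g = 1 := by
    intro g hg
    have hroots : fF.rootSet L ⊆ Set.range y := by
      intro u hu
      have := aeval_eq_zero_of_mem_rootSet hu
      rw [← eval_map_algebraMap, hmap] at this
      obtain ⟨i, hi⟩ := exists_eq_of_root hy (by simpa using this)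
      exact ⟨i, hi.symm⟩
    have := AlgHom.ext_of_adjoin_eq_top (φ₁ := (g : L →ₐ[F] L)) (φ₂ := AlgHom.id F L)
      (SplittingField.adjoin_rootSet fF) (by
        intro u hu
        obtain ⟨i, rfl⟩ := hroots hu
        exact hg i)
    ext u
    exact DFunLike.congr_fun this u
  -- The conjugates of `a` serve as the coefficients of the resolvent.
  obtain ⟨a, ha⟩ := exists_separating (algebraMap K L) hyi
  have hai : Function.Injective fun σ : ι => σ a := fun σ τ h =>
    (injective_of_perm_sums (a := fun σ : ι => algebraMap K L (σ a)) ha).1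
      (congrArg (algebraMap K L) h)
  have hm : ∏ σ : ι, (X - C (σ a)) = (minpoly k a).map (algebraMap k K) := by
    have hInt : IsIntegral k a := Algebra.IsIntegral.isIntegral a
    refine prod_X_sub_C_eq_of_injective ((minpoly.monic hInt).map _) ?_ hai fun σ => ?_
    · rw [natDegree_map, hcard, ← hdeg]
      exact minpoly.natDegree_le a
    · rw [eval_map_algebraMap, aeval_algHom_apply, minpoly.aeval, map_zero]
  obtain ⟨G, hG⟩ := exists_resolvent (R := k[X]) (fun σ : ι => σ a) _ hm (X ^ n - X + C X)
  let GK := G.map (mapRingHom (algebraMap k K))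
  have hGL : GK.map (algebraMap K[X] L) =
      ∏ π : Equiv.Perm ι, (X - C (∑ i, algebraMap K L (i a) * y (π i))) := by
    rw [Polynomial.map_map]
    refine hG L _ (algebraMap K L) y ?_ ?_
    · ext c
      simp [IsScalarTower.algebraMap_apply K K[X] L]
    · rw [hy]; simp
  obtain ⟨hGm, hGirr, hGsep⟩ := irreducible_resolvent (F := F) hn h1 h2 hy hyi hgen
    (fun σ : ι => σ a) ha GK hGL
  obtain ⟨d, hd0, hd⟩ := exists_discr GK hGsep
  have hGmk : G.Monic := monic_of_injective (map_injective _ (algebraMap k K).injective) hGm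
  obtain ⟨t, w, htw, hdt⟩ := hPAC.exists_zero G hGmk hGirr d hd0
  obtain ⟨hPm, hPd⟩ := trinomial_monic hn t
  set P : k[X] := X ^ n - X + C t with hPdef
  obtain ⟨z, hz⟩ := exists_prod_X_sub_C_eq (ι := ι) (hPm.map (algebraMap k K))
    (IsAlgClosed.splits _) (by rw [natDegree_map, hPd, hcard])
  let ev : K[X] →+* K := evalRingHom (algebraMap k K t)
  have hcomp : ev.comp (mapRingHom (algebraMap k K)) = (algebraMap k K).comp (evalRingHom t) := by
    ext <;> simp [ev]
  have hGz : GK.map ev = ∏ π : Equiv.Perm ι, (X - C (∑ i, i a * z (π i))) := by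
    rw [Polynomial.map_map]
    refine hG K _ (RingHom.id K) z ?_ ?_
    · ext c; simp [ev]
    · rw [hz, hPdef]; simp [ev]
  have hzi : Function.Injective fun π : Equiv.Perm ι => ∑ i, i a * z (π i) := by
    rw [← separable_prod_X_sub_C_iff, ← hGz]
    exact hd ev hdt
  -- The rational zero `w` singles out a numbering `z ∘ π` of the roots of `P`.
  have hw : ∃ π : Equiv.Perm ι, algebraMap k K w = ∑ i, i a * z (π i) := by
    have h3 : (GK.map ev).eval (algebraMap k K w) = 0 := by
      rw [Polynomial.map_map, hcomp, ← Polynomial.map_map, eval_map_algebraMap, aeval_algebraMap_apply,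
        coe_aeval_eq_eval, htw, map_zero]
    rw [hGz, eval_prod, Finset.prod_eq_zero_iff] at h3
    obtain ⟨π, -, h⟩ := h3
    exact ⟨π, by simpa only [eval_sub, eval_X, eval_C, sub_eq_zero] using h⟩
  obtain ⟨π, hπ⟩ := hw
  obtain ⟨x, hx, hxt⟩ := exists_generator a (fun σ => z (π σ)) P
    (by rw [← hz]; exact Equiv.prod_comp π fun σ => X - C (z σ))
    (fun ρ ρ' h => mul_left_cancel (a := π) (hzi h)) w hπ
  refine ⟨t, ?_, x, hx, hxt⟩
  have hInt : IsIntegral k x := Algebra.IsIntegral.isIntegral x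
  have hdx : (minpoly k x).natDegree = n := by
    rw [← IntermediateField.adjoin.finrank hInt, hxt, IntermediateField.finrank_top', hdeg]
  have : P = minpoly k x :=
    eq_of_monic_of_dvd_of_natDegree_le (minpoly.monic hInt) hPm (minpoly.dvd _ _ hx)
      (by rw [hPd, hdx])
  rw [← hPdef, this]
  exact minpoly.irreducible hInt
end

section
/- Let k be a PAC field of characteristic different from 2 and let K be a separable closure of k. Then K is generated over k by the set of all elements y ∈ K such that y^n - y lies in (the image of) k for some integer n ≥ 2; that is, the intermediate field of K/k generated by {y ∈ K : ∃ n ≥ 2, y^n - y ∈ k} is all of K. -/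
namespace PACTrinomial

open Polynomial

universe u v

/-! ### Irreducibility of the generic trinomial and of its two-root quotient -/

/-- Up to sign, the trinomial is linear in the parameter `t`. -/
theorem irr_trinomial {F : Type*} [Field F] (n : ℕ) :
    Irreducible (X ^ n - X - C X : F[X][X]) := by
  have h : Irreducible (X - C (X ^ n - X) : F[X][X]) := irreducible_X_sub_C _
  have h2 := (MulEquiv.irreducible_iff (Bivariate.swap (R := F))).mpr h
  have e : Bivariate.swap (X - C (X ^ n - X) : F[X][X]) = -(X ^ n - X - C X) := by
    rw [map_sub, Bivariate.swap_Y, Bivariate.swap_C]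
    simp
  rw [e] at h2
  exact (Associated.irreducible_iff (Associated.refl _).neg_left).mp h2

theorem monic_trinomial {R : Type*} [CommRing R] [Nontrivial R] {n : ℕ} (hn : 2 ≤ n) (t : R) :
    (X ^ n - X - C t).Monic := by
  rw [sub_sub]
  refine monic_X_pow_sub ?_
  rw [degree_X_add_C]
  exact_mod_cast (by omega)

theorem natDegree_trinomial {R : Type*} [CommRing R] [Nontrivial R] {n : ℕ} (hn : 2 ≤ n) (t : R) :
    (X ^ n - X - C t).natDegree = n := by
  rw [sub_sub]
  apply natDegree_eq_of_degree_eq_some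
  rw [degree_sub_eq_left_of_degree_lt, degree_X_pow]
  rw [degree_X_pow, degree_X_add_C]
  exact_mod_cast (by omega)

/-- The polynomial `1 + V + ⋯ + V ^ (n - 1) - W ^ (n - 1)`, with `V` the outer variable. If `x` and
`w` are distinct roots of `Y ^ n - Y - t`, it vanishes at `V = w / x`, `W = x⁻¹`. As a polynomial in
`W` it is Eisenstein at a simple root of the geometric sum. -/
theorem irr_geom {F : Type*} [Field F] [IsAlgClosed F] {n : ℕ} (hn : 2 ≤ n)
    (hn0 : (n : F) ≠ 0) :
    Irreducible (∑ i ∈ Finset.range n, X ^ i - C X ^ (n - 1) : F[X][X]) := by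
  set h : F[X] := ∑ i ∈ Finset.range n, X ^ i with hh
  have hmul : h * (X - 1) = X ^ n - 1 := geom_sum_mul X n
  have hsep : (X ^ n - C 1 : F[X]).Separable := separable_X_pow_sub_C 1 hn0 one_ne_zero
  rw [C_1, ← hmul] at hsep
  have hsep2 : h.Separable := hsep.of_mul_left
  have hdeg : h.natDegree = n - 1 := by
    have h0 : h ≠ 0 := by rintro h0; rw [h0] at hsep2; exact not_separable_zero hsep2
    have := congrArg natDegree hmul
    rw [natDegree_mul h0 (by simpa using X_sub_C_ne_zero (1:F))] at this
    rw [← C_1, natDegree_X_sub_C, natDegree_X_pow_sub_C] at this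
    omega
  obtain ⟨ζ, hζ⟩ := IsAlgClosed.exists_root h (by
    apply ne_of_gt; apply natDegree_pos_iff_degree_pos.mp; omega)
  have hdvd : X - C ζ ∣ h := dvd_iff_isRoot.mpr hζ
  have hP : (Ideal.span {X - C ζ}).IsPrime :=
    (Ideal.span_singleton_prime (X_sub_C_ne_zero ζ)).mpr (prime_X_sub_C ζ)
  have hm : (X ^ (n - 1) - C h : F[X][X]).Monic := monic_X_pow_sub_C _ (by omega)
  have hd : (X ^ (n - 1) - C h : F[X][X]).natDegree = n - 1 := natDegree_X_pow_sub_C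
  have key : Irreducible (X ^ (n - 1) - C h : F[X][X]) := by
    apply irreducible_of_eisenstein_criterion hP
    · rw [hm.leadingCoeff]; exact fun h => hP.ne_top ((Ideal.eq_top_iff_one _).mpr h)
    · intro m hmd
      rw [degree_eq_natDegree hm.ne_zero, hd] at hmd
      have hmd' : m < n - 1 := by exact_mod_cast hmd
      rw [coeff_sub, coeff_X_pow, if_neg (by omega), coeff_C]
      split_ifs
      · simpa [Ideal.mem_span_singleton] using hdvd
      · simp
    · apply natDegree_pos_iff_degree_pos.mp; omega
    · rw [coeff_sub, coeff_X_pow, if_neg (by omega), coeff_C_zero, zero_sub, Ideal.neg_mem_iff,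
        Ideal.span_singleton_pow, Ideal.mem_span_singleton, pow_two]
      intro hdd
      exact (irreducible_X_sub_C ζ).not_isUnit (hsep2.squarefree _ hdd)
    · exact hm.isPrimitive
  have h2 := (MulEquiv.irreducible_iff (Bivariate.swap (R := F))).mpr key
  have e : Bivariate.swap (X ^ (n - 1) - C h : F[X][X])
      = -(∑ i ∈ Finset.range n, X ^ i - C X ^ (n - 1)) := by
    rw [map_sub, map_pow, Bivariate.swap_Y, Bivariate.swap_C, hh]
    simp [Polynomial.map_sum]
  rw [e] at h2
  exact (Associated.irreducible_iff (Associated.refl _).neg_left).mp h2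

section
variable {F E : Type*} [Field F] [Field E] [Algebra (RatFunc F) E]
  {n : ℕ}

theorem irr_trinomial_ratFunc (hn : 2 ≤ n) :
    Irreducible (X ^ n - X - C RatFunc.X : (RatFunc F)[X]) := by
  have h := (Monic.irreducible_iff_irreducible_map_fraction_map (K := RatFunc F)
    (monic_trinomial hn (X : F[X]))).mp (irr_trinomial n)
  simpa using h

/-- The Galois group acts transitively on the roots of the generic trinomial. -/
theorem conj_root [Normal (RatFunc F) E] (hn : 2 ≤ n) {x y : E}
    (hx : x ^ n - x = algebraMap (RatFunc F) E RatFunc.X)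
    (hy : y ^ n - y = algebraMap (RatFunc F) E RatFunc.X) :
    ∃ σ : Gal(E/RatFunc F), σ x = y := by
  have h := minpoly.eq_of_irreducible_of_monic (irr_trinomial_ratFunc (F := F) hn) (x := y)
    (by simp [hy]) (monic_trinomial hn _)
  apply minpoly.exists_algEquiv_of_root (Algebra.IsAlgebraic.isAlgebraic y)
  rw [← h]
  simp [hx]

/-- The stabilizer of a root `x` acts transitively on the other roots: `F(t)(x) = F(x⁻¹)` is a rational
function field, over which `y / x` and `z / x` share the irreducible polynomial of `irr_geom`. -/
theorem conj_root_stab [IsAlgClosed F] [Algebra F E] [IsScalarTower F (RatFunc F) E]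
    [Normal (RatFunc F) E] (hn : 2 ≤ n) (hn0 : (n : F) ≠ 0)
    {x y z : E}
    (hx : x ^ n - x = algebraMap (RatFunc F) E RatFunc.X)
    (hy : y ^ n - y = algebraMap (RatFunc F) E RatFunc.X)
    (hz : z ^ n - z = algebraMap (RatFunc F) E RatFunc.X) (hyx : y ≠ x) (hzx : z ≠ x) :
    ∃ σ : Gal(E/RatFunc F), σ x = x ∧ σ y = z := by
  have htr : Transcendental F (algebraMap (RatFunc F) E RatFunc.X) :=
    (transcendental_algebraMap_iff (algebraMap (RatFunc F) E).injective).mpr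
      RatFunc.transcendental_X
  have hxtr : Transcendental F x := by
    intro h
    apply htr
    rw [← hx]
    exact (h.pow n).sub h
  have hx0 : x ≠ 0 := by
    rintro rfl
    exact hxtr isAlgebraic_zero
  have hwtr : Transcendental F x⁻¹ := fun h => hxtr (IsAlgebraic.inv_iff.mp h)
  -- `ψ` embeds `RatFunc F` into `E` by sending the variable to `x⁻¹`; its image `R` contains `F(t)`.
  let φ : F[X] →+* E := (aeval x⁻¹ : F[X] →ₐ[F] E)
  have hφ : Function.Injective φ := transcendental_iff_injective.mp hwtr
  let ψ : RatFunc F →+* E := IsFractionRing.lift (A := F[X]) hφ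
  have hψ (p : F[X]) : ψ (algebraMap _ _ p) = aeval x⁻¹ p := IsFractionRing.lift_algebraMap hφ p
  have hψX : ψ RatFunc.X = x⁻¹ := by
    rw [← RatFunc.algebraMap_X, hψ, aeval_X]
  have hxmem : x ∈ ψ.fieldRange := by
    rw [← inv_inv x, ← hψX]
    exact inv_mem ⟨_, rfl⟩
  have hpol (p : F[X]) : algebraMap (RatFunc F) E (algebraMap _ _ p) ∈ ψ.fieldRange := by
    have hC (a : F) : algebraMap F E a ∈ ψ.fieldRange :=
      ⟨algebraMap F[X] _ (C a), by rw [hψ, aeval_C]⟩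
    induction p using Polynomial.induction_on' with
    | add p q hp hq => rw [map_add, map_add]; exact add_mem hp hq
    | monomial m a =>
      rw [← C_mul_X_pow_eq_monomial, map_mul, map_pow, RatFunc.algebraMap_X, map_mul, map_pow, ← hx]
      refine mul_mem ?_ (pow_mem (sub_mem (pow_mem hxmem _) hxmem) _)
      convert hC a using 1
      rw [IsScalarTower.algebraMap_apply F (RatFunc F) E]
      simp
  let R : IntermediateField (RatFunc F) E :=
    { ψ.fieldRange with
      algebraMap_mem' := by
        intro r
        induction r using RatFunc.induction_on with
        | f p q hq =>
          rw [map_div₀]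
          exact div_mem (hpol p) (hpol q) }
  have hxR : x ∈ R := hxmem
  let e : RatFunc F ≃+* R := ψ.rangeRestrictFieldEquiv
  have hirr : Irreducible (∑ i ∈ Finset.range n, X ^ i - C RatFunc.X ^ (n - 1) : (RatFunc F)[X]) ∧
      Monic (∑ i ∈ Finset.range n, X ^ i - C RatFunc.X ^ (n - 1) : (RatFunc F)[X]) := by
    have hmon : Monic (∑ i ∈ Finset.range n, X ^ i - C X ^ (n - 1) : F[X][X]) := by
      obtain ⟨m, rfl⟩ : ∃ m, n = m + 1 := ⟨n - 1, by omega⟩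
      rw [Finset.sum_range_succ, add_comm, add_sub_assoc, Nat.add_sub_cancel]
      apply monic_X_pow_add
      rw [← mem_degreeLT]
      refine sub_mem (sum_mem fun i hi => ?_) ?_
      · rw [mem_degreeLT, degree_X_pow]
        exact_mod_cast Finset.mem_range.mp hi
      · rw [mem_degreeLT, ← C_pow]
        exact degree_C_le.trans_lt (by exact_mod_cast (by omega))
    have h := (Monic.irreducible_iff_irreducible_map_fraction_map (K := RatFunc F)
      hmon).mp (irr_geom hn hn0)
    have h2 := hmon.map (algebraMap F[X] (RatFunc F))
    simp [Polynomial.map_sum] at h h2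
    exact ⟨h, h2⟩
  set q := (∑ i ∈ Finset.range n, X ^ i - C RatFunc.X ^ (n - 1) : (RatFunc F)[X]) with hq
  have hqirr : Irreducible (q.map e.toRingHom) :=
    (MulEquiv.irreducible_iff (Polynomial.mapEquiv e)).mpr hirr.1
  have hqmon : (q.map e.toRingHom).Monic := hirr.2.map _
  have hroot (w : E) (hw : w ^ n - w = algebraMap (RatFunc F) E RatFunc.X) (hwx : w ≠ x) :
      aeval (w / x) (q.map e.toRingHom) = 0 := by
    have h1 : aeval (w / x) (q.map e.toRingHom) =
        ∑ i ∈ Finset.range n, (w / x) ^ i - x⁻¹ ^ (n - 1) := by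
      rw [aeval_def, eval₂_map]
      have : (algebraMap R E).comp e.toRingHom = ψ := rfl
      rw [this, hq]
      rw [← C_pow, eval₂_sub, eval₂_C, map_pow, hψX, eval₂_finsetSum]
      simp
    rw [h1]
    have h2 : w / x - 1 ≠ 0 := by
      rw [sub_ne_zero]; intro h; exact hwx (by field_simp at h; exact h)
    refine (mul_eq_zero.mp ?_).resolve_right h2
    rw [sub_mul, geom_sum_mul]
    obtain ⟨m, rfl⟩ : ∃ m, n = m + 1 := ⟨n - 1, by omega⟩
    have h3 : w ^ (m + 1) - w = x ^ (m + 1) - x := hw.trans hx.symm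
    simp only [Nat.add_sub_cancel]
    have h4 : x⁻¹ ^ m = x / x ^ (m + 1) := by
      rw [inv_pow, pow_succ]; field_simp
    rw [h4, div_pow]
    field_simp
    linear_combination h3
  have hmin := minpoly.eq_of_irreducible_of_monic hqirr (hroot z hz hzx) hqmon
  have : Normal R E := inferInstance
  obtain ⟨σ, hσ⟩ := minpoly.exists_algEquiv_of_root (K := R) (x := y / x) (y := z / x)
    (Algebra.IsAlgebraic.isAlgebraic _) (by rw [← hmin]; exact hroot y hy hyx)
  have hσx : σ x = x := σ.commutes ⟨x, hxR⟩
  refine ⟨σ.restrictScalars (RatFunc F), hσx, ?_⟩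
  rw [map_div₀, hσx] at hσ
  field_simp at hσ
  exact hσ
end

/-! ### A transposition from inertia at a critical value -/

/-- If `c` is a critical point of `Y ^ n - Y`, it is the only multiple root of the trinomial with the
parameter `c ^ n - c`. -/
theorem crit_unique {M : Type*} [Field M] {n : ℕ} {c b : M} (hn : 2 ≤ n)
    (hn1 : (n : M) ≠ 1) (hc : n * c ^ (n - 1) = 1)
    (h : (X - C b) ^ 2 ∣ (X ^ n - X - C (c ^ n - c))) : b = c := by
  obtain ⟨m, rfl⟩ : ∃ m, n = m + 1 := ⟨n - 1, by omega⟩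
  obtain ⟨r, hr⟩ := h
  have h0 := congrArg (eval b) hr
  have h1 := congrArg (fun p => eval b (derivative p)) hr
  simp [derivative_pow] at h0 h1
  simp at hc
  have hm : ((m : M)) ≠ 0 := by simpa using hn1
  have h2 : ((m : M) + 1) * (c ^ m * c - c) = (m + 1) * (b ^ m * b - b) := by
    rw [← pow_succ, ← pow_succ]; linear_combination -(m + 1 : M) * h0
  have : (m : M) * (b - c) = 0 := by
    linear_combination h2 - c * hc + b * h1
  exact sub_eq_zero.mp ((mul_eq_zero.mp this).resolve_left hm)

theorem crit_double {M : Type*} [CommRing M] {n : ℕ} {c : M}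
    (hc : n * c ^ (n - 1) = 1) :
    (X - C c) ^ 2 ∣ (X ^ n - X - C (c ^ n - c)) := by
  obtain ⟨r, hr⟩ : X - C c ∣ (X ^ n - X - C (c ^ n - c)) := dvd_iff_isRoot.mpr (by simp)
  have h1 := congrArg (fun p => eval c (derivative p)) hr
  simp [derivative_pow] at h1
  rw [hc, sub_self] at h1
  rw [hr, pow_two]
  exact mul_dvd_mul_left _ (dvd_iff_isRoot.mpr h1.symm)

theorem crit_not_triple {M : Type*} [Field M] {n : ℕ} {c : M} (hn : 2 ≤ n)
    (hn1 : (n : M) ≠ 1) (hc : n * c ^ (n - 1) = 1) :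
    ¬ (X - C c) ^ 3 ∣ (X ^ n - X - C (c ^ n - c)) := by
  rintro ⟨r, hr⟩
  obtain ⟨m, rfl⟩ : ∃ m, n = m + 2 := ⟨n - 2, by omega⟩
  have h1 := congrArg (fun p => eval c (derivative (derivative p))) hr
  simp [derivative_pow] at h1
  have e : m + 2 - 1 = m + 1 := by omega
  rw [e] at hc
  push_cast at hc hn1
  have h2 : (m : M) + 1 ≠ 0 := by intro h; apply hn1; linear_combination h
  have hc0 : c ≠ 0 := by rintro rfl; simp at hc
  have h3 : (m : M) + 2 ≠ 0 := by intro h; rw [h] at hc; simp at hc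
  rcases h1 with h1 | h1 | h1
  · exact h3 h1
  · exact h2 h1
  · exact hc0 h1.1

/-- A field automorphism permutes an enumeration of the roots of a polynomial over the base field. -/
theorem exists_perm {k E : Type*} [Field k] [Field E] [Algebra k E] {n : ℕ} {q : k[X]}
    (y : Fin n → E) (hinj : Function.Injective y)
    (hy : q.map (algebraMap k E) = ∏ i, (X - C (y i))) (σ : E ≃ₐ[k] E) :
    ∃ τ : Equiv.Perm (Fin n), ∀ i, σ (y i) = y (τ i) := by
  have hmap (i : Fin n) : ∃ j, σ (y i) = y j := by
    have h1 : aeval (y i) q = 0 := by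
      rw [← eval_map_algebraMap, hy, eval_prod]
      exact Finset.prod_eq_zero (Finset.mem_univ i) (by simp)
    have h2 : aeval (σ (y i)) q = 0 := by
      rw [show σ (y i) = (σ : E →ₐ[k] E) (y i) from rfl, aeval_algHom_apply, h1, map_zero]
    rw [← eval_map_algebraMap, hy, eval_prod] at h2
    obtain ⟨j, -, hj⟩ := Finset.prod_eq_zero_iff.mp h2
    rw [eval_sub, eval_X, eval_C, sub_eq_zero] at hj
    exact ⟨j, hj⟩
  choose τ₀ hτ₀ using hmap
  have hτinj : Function.Injective τ₀ := by
    intro i j hij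
    apply hinj; apply σ.injective; rw [hτ₀, hτ₀, hij]
  exact ⟨Equiv.ofBijective τ₀ (Finite.injective_iff_bijective.mp hτinj), hτ₀⟩

/-- Let `P` be a prime of the integral closure of `F[t]` above the critical value `t = c ^ n - c`.
It is ramified because `c` is a double root of the trinomial modulo `P`; since all other roots are
simple and `c` is not a triple root, a nontrivial inertia element acts as a transposition. -/
theorem exists_swap {F E : Type*} [Field F] [IsAlgClosed F] [Field E] [Algebra (RatFunc F) E]
    [Algebra F[X] E] [IsScalarTower F[X] (RatFunc F) E]
    [FiniteDimensional (RatFunc F) E] [IsGalois (RatFunc F) E]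
    {n : ℕ} (hn : 2 ≤ n) (hn0 : (n : F) ≠ 0) (hn1 : (n : F) ≠ 1)
    (y : Fin n → E) (hinj : Function.Injective y)
    (hy : X ^ n - X - C (algebraMap (RatFunc F) E RatFunc.X) = ∏ i, (X - C (y i)))
    (hgen : IntermediateField.adjoin (RatFunc F) (Set.range y) = ⊤) :
    ∃ (σ : Gal(E/RatFunc F)) (τ : Equiv.Perm (Fin n)), τ.IsSwap ∧ ∀ i, σ (y i) = y (τ i) := by
  classical
  let S := integralClosure F[X] E
  have hyS (i : Fin n) : IsIntegral F[X] (y i) := by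
    refine ⟨X ^ n - X - C X, monic_trinomial hn _, ?_⟩
    have h := congrArg (eval (y i)) hy
    rw [eval_prod, Finset.prod_eq_zero (Finset.mem_univ i) (by simp)] at h
    simpa [IsScalarTower.algebraMap_apply F[X] (RatFunc F) E] using h
  let Y (i : Fin n) : S := ⟨y i, hyS i⟩
  have hY : X ^ n - X - C (algebraMap F[X] S X) = ∏ i, (X - C (Y i)) := by
    apply Polynomial.map_injective (algebraMap S E) Subtype.val_injective
    rw [Polynomial.map_prod]
    simp only [Polynomial.map_sub, Polynomial.map_pow, map_X, map_C]
    rw [← IsScalarTower.algebraMap_apply, IsScalarTower.algebraMap_apply F[X] (RatFunc F) E,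
      RatFunc.algebraMap_X]
    exact hy
  have : IsIntegralClosure S F[X] E := inferInstance
  have : Module.Finite F[X] S := IsIntegralClosure.finite F[X] (RatFunc F) E S
  have : IsDedekindDomain S := integralClosure.isDedekindDomain F[X] (RatFunc F) E
  have : IsFractionRing S E := integralClosure.isFractionRing_of_finite_extension (RatFunc F) E
  have : IsGaloisGroup Gal(E/RatFunc F) F[X] S :=
    IsGaloisGroup.of_isFractionRing _ F[X] S (RatFunc F) E
  obtain ⟨c, hc⟩ : ∃ c : F, n * c ^ (n - 1) = 1 := by
    obtain ⟨c, hc⟩ := IsAlgClosed.exists_pow_nat_eq ((n : F)⁻¹) (n := n - 1) (by omega)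
    exact ⟨c, by rw [hc, mul_inv_cancel₀ hn0]⟩
  let p : Ideal F[X] := Ideal.span {X - C (c ^ n - c)}
  have hp : p.IsPrime :=
    (Ideal.span_singleton_prime (X_sub_C_ne_zero _)).mpr (prime_X_sub_C _)
  have hp0 : p ≠ ⊥ := by
    simpa [p, Ideal.span_singleton_eq_bot] using X_sub_C_ne_zero (c ^ n - c)
  have : p.IsMaximal := hp.isMaximal hp0
  have hinjE : Function.Injective (algebraMap F[X] E) := by
    rw [IsScalarTower.algebraMap_eq F[X] (RatFunc F) E]
    exact (algebraMap (RatFunc F) E).injective.comp (RatFunc.algebraMap_injective F)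
  have hinjS : Function.Injective (algebraMap F[X] S) := by
    refine Function.Injective.of_comp (f := algebraMap S E) ?_
    rwa [← RingHom.coe_comp, ← IsScalarTower.algebraMap_eq]
  have : FaithfulSMul F[X] S := (faithfulSMul_iff_algebraMap_injective _ _).mpr hinjS
  have : Algebra.IsIntegral F[X] S := inferInstance
  obtain ⟨P, hP, hPp⟩ := Ideal.exists_maximal_ideal_liesOver_of_isIntegral (S := S) p
  have : PerfectField p.ResidueField := by
    have h1 : Algebra.IsIntegral F (F[X] ⧸ p) := by
      have h2 : Function.Surjective (algebraMap F (F[X] ⧸ p)) := by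
        intro x
        obtain ⟨q, rfl⟩ := Ideal.Quotient.mk_surjective x
        refine ⟨q.eval (c ^ n - c), ?_⟩
        refine (Ideal.Quotient.mk_eq_mk_iff_sub_mem _ _).mpr ?_
        rw [← neg_sub, Ideal.neg_mem_iff, Ideal.mem_span_singleton]
        exact X_sub_C_dvd_sub_C_eval
      exact Algebra.isIntegral_of_surjective h2
    have : Algebra.IsIntegral (F[X] ⧸ p) p.ResidueField :=
      Algebra.isIntegral_of_surjective p.bijective_algebraMap_quotient_residueField.2
    have : Algebra.IsIntegral F p.ResidueField := Algebra.IsIntegral.trans (F[X] ⧸ p)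
    exact Algebra.IsAlgebraic.perfectField (K := F)
  let M := S ⧸ P
  let := Ideal.Quotient.field P
  let π : S →+* M := Ideal.Quotient.mk P
  let ι : F →+* M := π.comp ((algebraMap F[X] S).comp C)
  have hπX : π (algebraMap F[X] S X) = (ι c) ^ n - ι c := by
    have h1 : X - C (c ^ n - c) ∈ P.under F[X] := by
      rw [← Ideal.over_def P p]
      exact Ideal.mem_span_singleton_self _
    have h2 : π (algebraMap F[X] S (X - C (c ^ n - c))) = 0 :=
      Ideal.Quotient.eq_zero_iff_mem.mpr h1
    rw [map_sub, map_sub, sub_eq_zero] at h2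
    rw [h2]
    exact (map_sub ι _ _).trans (by rw [map_pow])
  have hπY : X ^ n - X - C ((ι c) ^ n - ι c) = ∏ i, (X - C (π (Y i))) := by
    rw [← hπX]
    simpa [Polynomial.map_prod] using congrArg (Polynomial.map π) hY
  -- The relation `(Y i - c) ^ 2 ∣ t - (c ^ n - c)` puts the uniformizer of `p` into `P ^ 2`.
  have hram : Nat.card (P.inertia Gal(E/RatFunc F)) ≠ 1 := by
    have : P.IsPrime := hP.isPrime
    rw [Ideal.card_inertia_eq_ramificationIdxIn (G := Gal(E/RatFunc F)) p P,
      Ideal.ramificationIdxIn_eq_ramificationIdx p P Gal(E/RatFunc F),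
      ← Ideal.ramificationIdx'_eq_ramificationIdx p P hp0, Ideal.ramificationIdx'_ne_one_iff
        (Ideal.map_le_iff_le_comap.mpr (Ideal.over_def P p).le), Ideal.map_span,
        Set.image_singleton, Ideal.span_singleton_le_iff_mem]
    obtain ⟨i, hi⟩ : ∃ i, π (Y i) = ι c := by
      have h := congrArg (eval (ι c)) hπY
      rw [eval_prod] at h
      obtain ⟨i, -, hi⟩ := Finset.prod_eq_zero_iff.mp (h.symm.trans (by simp))
      rw [eval_sub, eval_X, eval_C, sub_eq_zero] at hi
      exact ⟨i, hi.symm⟩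
    have hi' : Y i - algebraMap F[X] S (C c) ∈ P :=
      (Ideal.Quotient.mk_eq_mk_iff_sub_mem _ _).mp hi
    obtain ⟨r, hr⟩ := crit_double hc
    have h1 := congrArg (eval₂ ((algebraMap F[X] S).comp C) (Y i)) hr
    have h2 := congrArg (eval (Y i)) hY
    rw [eval_prod, Finset.prod_eq_zero (Finset.mem_univ i) (by simp)] at h2
    have h3 : algebraMap F[X] S (X - C (c ^ n - c)) = (Y i - algebraMap F[X] S (C c)) ^ 2 *
        eval₂ ((algebraMap F[X] S).comp C) (Y i) r := by
      simp only [eval₂_sub, eval₂_mul, eval₂_pow, eval₂_X, eval₂_C, RingHom.comp_apply, eval_sub,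
        eval_pow, eval_X, eval_C] at h1 h2
      rw [← h1, map_sub]
      linear_combination -h2
    rw [h3]
    exact Ideal.mul_mem_right _ _ (Ideal.pow_mem_pow hi' 2)
  have hc' : n * ι c ^ (n - 1) = 1 := by simpa using congrArg ι hc
  have hn1' : (n : M) ≠ 1 := by
    intro h; apply hn1; apply ι.injective; simpa using h
  -- Roots that collide modulo `P` reduce to `c`, and no three roots do.
  have hcol {i j : Fin n} (hij : i ≠ j) (h : π (Y i) = π (Y j)) : π (Y i) = ι c := by
    apply crit_unique hn hn1' hc'
    rw [hπY, ← Finset.prod_erase_mul _ _ (Finset.mem_univ i),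
      ← Finset.prod_erase_mul _ _ (Finset.mem_erase.mpr ⟨hij.symm, Finset.mem_univ j⟩), ← h,
      mul_assoc, ← pow_two]
    exact dvd_mul_left _ _
  have htri {i j l : Fin n} (hij : i ≠ j) (hil : i ≠ l) (hjl : j ≠ l) (hi : π (Y i) = ι c)
      (hj : π (Y j) = ι c) (hl : π (Y l) = ι c) : False := by
    apply crit_not_triple hn hn1' hc'
    rw [hπY, ← Finset.prod_erase_mul _ _ (Finset.mem_univ i),
      ← Finset.prod_erase_mul _ _ (Finset.mem_erase.mpr ⟨hij.symm, Finset.mem_univ j⟩),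
      ← Finset.prod_erase_mul _ _ (Finset.mem_erase.mpr ⟨hjl.symm,
        Finset.mem_erase.mpr ⟨hil.symm, Finset.mem_univ l⟩⟩), hi, hj, hl]
    exact ⟨_, by ring⟩
  have : Nontrivial (P.inertia Gal(E/RatFunc F)) := by
    rw [← not_subsingleton_iff_nontrivial]
    intro h
    exact hram (Nat.card_eq_one_iff_unique.mpr ⟨h, ⟨1⟩⟩)
  obtain ⟨⟨σ, hσP⟩, hσ1⟩ := exists_ne (1 : P.inertia Gal(E/RatFunc F))
  have hσ1 : σ ≠ 1 := fun h => hσ1 (Subtype.ext h)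
  obtain ⟨τ, hτ⟩ :=
    exists_perm (q := X ^ n - X - C RatFunc.X) y hinj (by simpa using hy) σ
  have hπτ (i) : π (Y (τ i)) = π (Y i) := by
    have h := hσP (Y i)
    have h2 : σ • Y i = Y (τ i) := Subtype.ext (hτ i)
    rw [h2] at h
    exact (Ideal.Quotient.mk_eq_mk_iff_sub_mem _ _).mpr h
  have hτ1 : ∃ i, τ i ≠ i := by
    by_contra! hcon
    apply hσ1
    ext x
    have hx : x ∈ IntermediateField.adjoin (RatFunc F) (Set.range y) := by
      rw [hgen]; trivial
    induction hx using IntermediateField.adjoin_induction with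
    | mem x hx => obtain ⟨i, rfl⟩ := hx; rw [hτ, hcon]; rfl
    | algebraMap x => exact σ.commutes x
    | add x y _ _ hx hy => rw [map_add, hx, hy, map_add]
    | inv x _ hx => rw [map_inv₀, hx, map_inv₀]
    | mul x y _ _ hx hy => rw [map_mul, hx, hy, map_mul]
  obtain ⟨i, hi⟩ := hτ1
  refine ⟨σ, τ, ⟨i, τ i, hi.symm, ?_⟩, hτ⟩
  have hci : π (Y i) = ι c := hcol hi.symm (hπτ i).symm
  have hcti : π (Y (τ i)) = ι c := (hπτ i).trans hci
  have hcc (j) (hj : π (Y j) = ι c) : j = i ∨ j = τ i := by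
    by_contra! hcon
    exact htri hi.symm hcon.1.symm hcon.2.symm hci hcti hj
  ext j
  congr 1
  by_cases hj : τ j = j
  · have : j ≠ i := by rintro rfl; exact hi hj
    have : j ≠ τ i := by
      rintro rfl; exact hi (τ.injective hj)
    rw [hj, Equiv.swap_apply_of_ne_of_ne] <;> assumption
  · have hcj : π (Y j) = ι c := hcol (Ne.symm hj) (hπτ j).symm
    rcases hcc j hcj with rfl | rfl
    · rw [Equiv.swap_apply_left]
    · rw [Equiv.swap_apply_right]
      exact (hcc _ ((hπτ _).trans hcj)).resolve_right hj

/-! ### The Galois group of the generic trinomial -/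

/-- The Galois group of the generic trinomial realizes every permutation of the roots: a doubly
transitive, hence primitive, permutation group containing a transposition is the symmetric group. -/
theorem galois_full {F E : Type*} [Field F] [IsAlgClosed F] [Field E] [Algebra (RatFunc F) E]
    [Algebra F E] [IsScalarTower F (RatFunc F) E]
    [Algebra F[X] E] [IsScalarTower F[X] (RatFunc F) E]
    [FiniteDimensional (RatFunc F) E] [IsGalois (RatFunc F) E]
    {n : ℕ} (hn : 2 ≤ n) (hn0 : (n : F) ≠ 0) (hn1 : (n : F) ≠ 1)
    (y : Fin n → E) (hinj : Function.Injective y)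
    (hy : X ^ n - X - C (algebraMap (RatFunc F) E RatFunc.X) = ∏ i, (X - C (y i)))
    (hgen : IntermediateField.adjoin (RatFunc F) (Set.range y) = ⊤) (τ : Equiv.Perm (Fin n)) :
    ∃ σ : Gal(E/RatFunc F), ∀ i, σ (y i) = y (τ i) := by
  classical
  have hroot (i : Fin n) : y i ^ n - y i = algebraMap (RatFunc F) E RatFunc.X := by
    have h := congrArg (eval (y i)) hy
    rw [eval_prod, Finset.prod_eq_zero (Finset.mem_univ i) (by simp)] at h
    simpa [sub_eq_zero] using h
  have hperm (σ : Gal(E/RatFunc F)) : ∃ τ : Equiv.Perm (Fin n), ∀ i, σ (y i) = y (τ i) :=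
    exists_perm (q := X ^ n - X - C RatFunc.X) y hinj (by simpa using hy) σ
  let G : Subgroup (Equiv.Perm (Fin n)) :=
    { carrier := {τ | ∃ σ : Gal(E/RatFunc F), ∀ i, σ (y i) = y (τ i)}
      one_mem' := ⟨1, fun i => rfl⟩
      mul_mem' := by
        rintro a b ⟨σ, hσ⟩ ⟨ρ, hρ⟩
        exact ⟨σ * ρ, fun i => by rw [AlgEquiv.mul_apply, hρ, hσ]; rfl⟩
      inv_mem' := by
        rintro a ⟨σ, hσ⟩
        refine ⟨σ⁻¹, fun i => ?_⟩
        have h : σ (y (a⁻¹ i)) = y i := (hσ _).trans (congrArg y (a.apply_symm_apply i))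
        rw [← h]
        exact σ.symm_apply_apply _ }
  suffices h : G = ⊤ by
    have : τ ∈ G := by rw [h]; trivial
    exact this
  obtain ⟨σ, ρ, hρ, hσρ⟩ := exists_swap hn hn0 hn1 y hinj hy hgen
  refine Equiv.Perm.subgroup_eq_top_of_isPreprimitive_of_isSwap_mem ?_ ρ hρ ⟨σ, hσρ⟩
  apply MulAction.isPreprimitive_of_is_two_pretransitive
  rw [MulAction.is_two_pretransitive_iff]
  intro a b c d hab hcd
  obtain ⟨σ₁, h₁⟩ := conj_root hn (hroot a) (hroot c)
  obtain ⟨τ₁, hτ₁⟩ := hperm σ₁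
  have hτ₁a : τ₁ a = c := hinj (by rw [← hτ₁, h₁])
  obtain ⟨σ₂, h₂, h₂'⟩ := conj_root_stab hn hn0 (hroot c) (hroot (τ₁ b)) (hroot d)
    (fun h => hab (τ₁.injective (hτ₁a.trans (hinj h).symm)))
    (fun h => hcd (hinj h).symm)
  obtain ⟨τ₂, hτ₂⟩ := hperm σ₂
  refine ⟨⟨τ₂, σ₂, hτ₂⟩ * ⟨τ₁, σ₁, hτ₁⟩, ?_, ?_⟩
  · change τ₂ (τ₁ a) = c
    rw [hτ₁a]
    exact hinj (by rw [← hτ₂, h₂])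
  · change τ₂ (τ₁ b) = d
    exact hinj (by rw [← hτ₂, h₂'])

/-! ### The resolvent and its discriminant -/

/-- The fundamental theorem on symmetric polynomials, phrased for evaluation: the value of `T` at `x`
is a polynomial `W` in the signed coefficients of `∏ j, (X - x j)`, uniformly in the target ring. -/
theorem symm_factor {n : ℕ} {B : Type v} [CommRing B] (T : MvPolynomial (Fin n) B)
    (hT : T.IsSymmetric) :
    ∃ W : MvPolynomial (Fin n) B, ∀ (R : Type u) [CommRing R] (φ : B →+* R) (x : Fin n → R),
      MvPolynomial.eval₂ φ x T = MvPolynomial.eval₂ φ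
        (fun i => (-1) ^ (i.1 + 1) * (∏ j, (X - C (x j))).coeff (n - (i.1 + 1))) W := by
  obtain ⟨W, hW⟩ := MvPolynomial.esymmAlgHom_surjective (σ := Fin n) B (n := n) (by simp) ⟨T, hT⟩
  have hW' : MvPolynomial.aeval (fun i : Fin n => MvPolynomial.esymm (Fin n) B (i + 1)) W = T := by
    rw [← MvPolynomial.esymmAlgHom_apply, hW]
  refine ⟨W, fun R _ φ x => ?_⟩
  let := φ.toAlgebra
  have hφ (p : MvPolynomial (Fin n) B) (z : Fin n → R) :
      MvPolynomial.eval₂ φ z p = MvPolynomial.aeval z p := rfl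
  rw [hφ, hφ, ← hW', MvPolynomial.comp_aeval_apply]
  congr 2
  ext i
  rw [MvPolynomial.aeval_esymm_eq_multiset_esymm]
  have h := Multiset.prod_X_sub_C_coeff (Finset.univ.val.map x) (k := n - (i.1 + 1)) (by simp)
  rw [Multiset.map_map] at h
  change _ = _ * ((Finset.univ.val.map (fun j => X - C (x j))).prod).coeff _
  have e : n - (n - (i.1 + 1)) = i.1 + 1 := by omega
  simp only [Multiset.card_map, Finset.card_val, Finset.card_univ, Fintype.card_fin, e] at h
  erw [h]
  rw [← mul_assoc, ← mul_pow]
  simp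

theorem symm_prod_left {n : ℕ} {B : Type v} [CommRing B] (a : B) (b : Fin n → B) :
    (∏ τ : Equiv.Perm (Fin n), (MvPolynomial.C a -
      ∑ i, MvPolynomial.X i * MvPolynomial.C (b (τ i))) :
        MvPolynomial (Fin n) B).IsSymmetric := by
  intro e
  simp only [map_prod, map_sub, map_sum, map_mul, MvPolynomial.rename_C, MvPolynomial.rename_X]
  refine Fintype.prod_equiv (Equiv.mulRight e⁻¹) _ _ fun τ => ?_
  rw [Fintype.sum_equiv e _
    (fun i => MvPolynomial.X i * MvPolynomial.C (b ((Equiv.mulRight e⁻¹ τ) i)))]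
  intro i
  simp

theorem symm_prod_right {n : ℕ} {B : Type v} [CommRing B] (a : B) (b : Fin n → B) :
    (∏ τ : Equiv.Perm (Fin n), (MvPolynomial.C a -
      ∑ i, MvPolynomial.C (b i) * MvPolynomial.X (τ i)) :
        MvPolynomial (Fin n) B).IsSymmetric := by
  intro e
  simp only [map_prod, map_sub, map_sum, map_mul, MvPolynomial.rename_C, MvPolynomial.rename_X]
  exact Fintype.prod_equiv (Equiv.mulLeft e) _ _ fun τ => rfl

/-- The resolvent `f(U, t) = ∏ τ, (U - ∑ i, α i * y (τ i))`, with `U` and `t` the variables `0` and `1`.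
Symmetry in the `α i` brings the coefficients down to `k`, and symmetry in the `y i` makes them
polynomials in `t`. The identity holds in every `F`-algebra where the trinomial is split. -/
theorem exists_resolvent {n : ℕ} {k F : Type u} [Field k] [Field F] [Algebra k F] (g : k[X])
    (α : Fin n → F) (hg : g.map (algebraMap k F) = ∏ i, (X - C (α i))) :
    ∃ f : MvPolynomial (Fin 2) k, ∀ (R : Type u) [CommRing R] [Algebra F R] (t u : R)
      (y : Fin n → R), X ^ n - X - C t = ∏ i, (X - C (y i)) →
      MvPolynomial.aeval ![u, t] (MvPolynomial.map (algebraMap k F) f) =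
        ∏ τ : Equiv.Perm (Fin n), (u - ∑ i, algebraMap F R (α i) * y (τ i)) := by
  classical
  -- In `T` the outer variables stand for the `α i`, the inner ones for the `y i`, and `X` for `U`.
  let T : MvPolynomial (Fin n) (MvPolynomial (Fin n) k[X]) :=
    ∏ τ : Equiv.Perm (Fin n), (MvPolynomial.C (MvPolynomial.C X) -
      ∑ i, MvPolynomial.X i * MvPolynomial.C (MvPolynomial.X (τ i)))
  have hT : T.IsSymmetric := symm_prod_left _ _
  obtain ⟨W, hW⟩ := symm_factor.{u} T hT
  let c (i : Fin n) : k := (-1) ^ (i.1 + 1) * g.coeff (n - (i.1 + 1))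
  -- `S` is `T` with the `α i` substituted, written through the coefficients of `g`.
  let S : MvPolynomial (Fin n) k[X] :=
    MvPolynomial.eval₂ (RingHom.id _) (fun i => MvPolynomial.C (C (c i))) W
  let θ : MvPolynomial (Fin n) k[X] →+* MvPolynomial (Fin n) F[X] :=
    MvPolynomial.map (mapRingHom (algebraMap k F))
  have hθ : Function.Injective θ :=
    MvPolynomial.map_injective _ (Polynomial.map_injective _ (algebraMap k F).injective)
  have hθS : θ S = ∏ τ : Equiv.Perm (Fin n), (MvPolynomial.C X -
      ∑ i, MvPolynomial.C (C (α i)) * MvPolynomial.X (τ i)) := by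
    have h := hW _ θ (fun i => MvPolynomial.C (C (α i)))
    have hc (i : Fin n) : θ (MvPolynomial.C (C (c i))) = (-1) ^ (i.1 + 1) *
        (∏ j, (X - C (MvPolynomial.C (σ := Fin n) (C (α j))))).coeff (n - (i.1 + 1)) := by
      have h2 := congrArg (Polynomial.map
        ((MvPolynomial.C : F[X] →+* MvPolynomial (Fin n) F[X]).comp C)) hg
      simp only [Polynomial.map_prod, Polynomial.map_sub, map_X, map_C, RingHom.comp_apply] at h2
      rw [← h2]
      simp [θ, c]
    have h3 : θ S = MvPolynomial.eval₂ θ (fun i => θ (MvPolynomial.C (C (c i)))) W := by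
      simp only [S]
      rw [MvPolynomial.eval₂_comp_left θ]
      rfl
    rw [h3]
    simp only [hc]
    rw [← h]
    simp [T, θ, MvPolynomial.eval₂_prod, MvPolynomial.eval₂_sum]
  have hS : S.IsSymmetric := by
    intro e
    apply hθ
    simp only [θ]
    rw [MvPolynomial.map_rename]
    change MvPolynomial.rename e (θ S) = θ S
    rw [hθS]
    exact symm_prod_right X (fun i => C (α i)) e
  obtain ⟨V, hV⟩ := symm_factor.{u} S hS
  let f : MvPolynomial (Fin 2) k := MvPolynomial.eval₂
    (aeval (MvPolynomial.X 0) : k[X] →ₐ[k] MvPolynomial (Fin 2) k).toRingHom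
    (fun i => (-1) ^ (i.1 + 1) *
      (X ^ n - X - C (MvPolynomial.X 1 : MvPolynomial (Fin 2) k)).coeff (n - (i.1 + 1))) V
  refine ⟨f, fun R _ _ t u y hy => ?_⟩
  let Φ : MvPolynomial (Fin 2) k →+* R :=
    ((MvPolynomial.aeval ![u, t] : MvPolynomial (Fin 2) F →ₐ[F] R) : MvPolynomial (Fin 2) F →+* R).comp
      (MvPolynomial.map (algebraMap k F))
  change Φ f = _
  let χ : F[X] →+* R := (aeval u : F[X] →ₐ[F] R)
  have hχ : Φ.comp (aeval (MvPolynomial.X 0) : k[X] →ₐ[k] MvPolynomial (Fin 2) k).toRingHom =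
      χ.comp (mapRingHom (algebraMap k F)) := by
    apply Polynomial.ringHom_ext
    · intro a
      simp [Φ, χ, MvPolynomial.algebraMap_eq]
    · simp [Φ, χ]
  have h1 : Φ f = MvPolynomial.eval₂ (χ.comp (mapRingHom (algebraMap k F))) y S := by
    rw [hV]
    simp only [f]
    rw [MvPolynomial.eval₂_comp_left Φ, hχ]
    congr 1
    ext i
    have h2 : Polynomial.map Φ (X ^ n - X - C (MvPolynomial.X 1)) = ∏ i, (X - C (y i)) := by
      rw [← hy]
      simp [Φ]
    rw [← h2, coeff_map]
    simp
  have h4 : MvPolynomial.eval₂ (χ.comp (mapRingHom (algebraMap k F))) y S =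
      MvPolynomial.eval₂ χ y (θ S) := by
    simp only [θ]
    rw [MvPolynomial.eval₂_map]
  rw [h1, h4, hθS]
  simp [MvPolynomial.eval₂_prod, MvPolynomial.eval₂_sum, χ]

/-- The discriminant of the resolvent as a polynomial in `t`. The pairs of distinct permutations are
written as `(τ, τ * ρ)` with `ρ ≠ 1`. -/
theorem exists_discr {n : ℕ} {F : Type u} [Field F] (α : Fin n → F) :
    ∃ D : F[X], ∀ (R : Type u) [CommRing R] [Algebra F R] (t : R)
      (y : Fin n → R), X ^ n - X - C t = ∏ i, (X - C (y i)) →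
      aeval t D = ∏ τ : Equiv.Perm (Fin n), ∏ ρ ∈ Finset.univ.erase (1 : Equiv.Perm (Fin n)),
        (∑ i, algebraMap F R (α i) * y (τ i) - ∑ i, algebraMap F R (α i) * y (τ (ρ i))) := by
  classical
  let T : MvPolynomial (Fin n) F :=
    ∏ τ : Equiv.Perm (Fin n), ∏ ρ ∈ Finset.univ.erase (1 : Equiv.Perm (Fin n)),
      (∑ i, MvPolynomial.C (α i) * MvPolynomial.X (τ i) -
        ∑ i, MvPolynomial.C (α i) * MvPolynomial.X (τ (ρ i)))
  have hT : T.IsSymmetric := by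
    intro e
    simp only [T, map_prod, map_sub, map_sum, map_mul, MvPolynomial.rename_C,
      MvPolynomial.rename_X]
    exact Fintype.prod_equiv (Equiv.mulLeft e) _ _ fun τ => rfl
  obtain ⟨W, hW⟩ := symm_factor.{u} T hT
  refine ⟨MvPolynomial.eval₂ C (fun i => (-1) ^ (i.1 + 1) *
      (X ^ n - X - C (X : F[X])).coeff (n - (i.1 + 1))) W, fun R _ _ t y hy => ?_⟩
  let Φ : F[X] →+* R := (aeval t : F[X] →ₐ[F] R)
  change Φ _ = _
  have hΦ : Φ.comp C = algebraMap F R := by ext; simp [Φ]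
  have h2 : Polynomial.map Φ (X ^ n - X - C X) = ∏ i, (X - C (y i)) := by
    rw [← hy]
    simp [Φ]
  have h := hW R (algebraMap F R) y
  rw [MvPolynomial.eval₂_comp_left Φ, hΦ]
  simp only [← h2, coeff_map] at h
  have h3 : (Φ ∘ fun i : Fin n => (-1) ^ (i.1 + 1) *
      (X ^ n - X - C (X : F[X])).coeff (n - (i.1 + 1))) = fun i => (-1) ^ (i.1 + 1) *
      Φ ((X ^ n - X - C (X : F[X])).coeff (n - (i.1 + 1))) := by
    ext i; simp
  rw [h3, ← h]
  simp [T, MvPolynomial.eval₂_prod, MvPolynomial.eval₂_sum]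

/-! ### Absolute irreducibility of the resolvent -/

/-- If all permutations of the `y i` are induced by automorphisms, a linear relation between the `y i`
over `F` has equal coefficients: compare it with its image under a transposition. -/
theorem coeff_eq_of_relation {n : ℕ} {F E : Type*} [Field F] [Field E] [Algebra F E]
    (y : Fin n → E) (hinj : Function.Injective y)
    (hfull : ∀ τ : Equiv.Perm (Fin n), ∃ σ : E →ₐ[F] E, ∀ i, σ (y i) = y (τ i))
    (a : Fin n → F) (h : ∑ i, algebraMap F E (a i) * y i = 0) (j l : Fin n) : a j = a l := by
  classical
  by_cases hjl : j = l
  · rw [hjl]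
  obtain ⟨σ, hσ⟩ := hfull (Equiv.swap j l)
  have h2 := congrArg σ h
  simp only [map_sum, map_mul, AlgHom.commutes, hσ, map_zero] at h2
  have h3 : ∑ i, algebraMap F E (a i) * (y i - y (Equiv.swap j l i)) = 0 := by
    simp only [mul_sub, Finset.sum_sub_distrib, h, h2, sub_zero]
  rw [← Finset.sum_subset (Finset.subset_univ {j, l}), Finset.sum_pair hjl] at h3
  · rw [Equiv.swap_apply_left, Equiv.swap_apply_right] at h3
    have h4 : algebraMap F E (a j - a l) * (y j - y l) = 0 := by
      rw [map_sub]; linear_combination h3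
    rcases mul_eq_zero.1 h4 with h5 | h5
    · exact sub_eq_zero.1 ((map_eq_zero _).1 h5)
    · exact absurd (hinj (sub_eq_zero.1 h5)) hjl
  · intro i _ hi
    simp only [Finset.mem_insert, Finset.mem_singleton, not_or] at hi
    rw [Equiv.swap_apply_of_ne_of_ne hi.1 hi.2, sub_self, mul_zero]

/-- Two equal sums give a linear relation with coefficients `α (τ⁻¹ i) - α (ρ⁻¹ i)`. These are all equal,
and they add up to zero, so they vanish as `n ≠ 0` in `F`. -/
theorem resolvent_roots_distinct {n : ℕ} {F E : Type*} [Field F] [Field E] [Algebra F E]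
    (hn0 : (n : F) ≠ 0) (y : Fin n → E) (hinj : Function.Injective y)
    (hfull : ∀ τ : Equiv.Perm (Fin n), ∃ σ : E →ₐ[F] E, ∀ i, σ (y i) = y (τ i))
    (α : Fin n → F) (hα : Function.Injective α) :
    Function.Injective fun τ : Equiv.Perm (Fin n) => ∑ i, algebraMap F E (α i) * y (τ i) := by
  intro τ ρ h
  have e (π : Equiv.Perm (Fin n)) : ∑ i, algebraMap F E (α i) * y (π i) =
      ∑ i, algebraMap F E (α (π⁻¹ i)) * y i :=
    Fintype.sum_equiv π _ _ fun i => by simp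
  simp only [e] at h
  let a (i : Fin n) : F := α (τ⁻¹ i) - α (ρ⁻¹ i)
  have ha := coeff_eq_of_relation y hinj hfull a (by
    simp only [a, map_sub, sub_mul, Finset.sum_sub_distrib, h, sub_self])
  have hs : ∑ i, a i = 0 := by
    simp only [a, Finset.sum_sub_distrib]
    rw [Equiv.sum_comp τ⁻¹ α, Equiv.sum_comp ρ⁻¹ α, sub_self]
  have h0 (i : Fin n) : a i = 0 := by
    rw [Finset.sum_congr rfl fun j _ => ha j i] at hs
    simp only [Finset.sum_const, Finset.card_univ, Fintype.card_fin, nsmul_eq_mul] at hs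
    exact (mul_eq_zero.1 hs).resolve_left hn0
  have : τ⁻¹ = ρ⁻¹ := Equiv.ext fun i => hα (sub_eq_zero.1 (h0 i))
  exact inv_injective this

theorem enum_roots {n : ℕ} {L : Type*} [Field L] (p : L[X]) (hm : p.Monic) (hs : p.Splits)
    (hsep : p.Separable) (hd : p.natDegree = n) :
    ∃ y : Fin n → L, Function.Injective y ∧ p = ∏ i, (X - C (y i)) := by
  classical
  have hnd := nodup_roots hsep
  have hc : p.roots.toFinset.card = n := by
    rw [Multiset.toFinset_card_of_nodup hnd, ← hd]
    exact hs.natDegree_eq_card_roots.symm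
  let e := (p.roots.toFinset.equivFinOfCardEq hc).symm
  refine ⟨fun i => (e i : L), fun i j h => e.injective (Subtype.ext h), ?_⟩
  rw [Equiv.prod_comp e (fun z => X - C (z : L)), Finset.prod_coe_sort p.roots.toFinset
    (fun z => X - C z)]
  conv_lhs => rw [hs.eq_prod_roots_of_monic hm]
  rw [Finset.prod, Multiset.toFinset_val, hnd.dedup]

theorem separable_trinomial {n : ℕ} {F : Type*} [Field F] (hn : 2 ≤ n) (hn0 : (n : F) ≠ 0) :
    (X ^ n - X - C RatFunc.X : (RatFunc F)[X]).Separable := by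
  rw [separable_iff_derivative_ne_zero (irr_trinomial_ratFunc hn)]
  intro h
  have h2 := congrArg (fun p => coeff p (n - 1)) h
  have : n - 1 ≠ 0 := by omega
  simp [derivative_X_pow, coeff_one, this] at h2
  apply hn0
  have : algebraMap F (RatFunc F) n = 0 := by simpa using h2
  exact (map_eq_zero _).1 this

/-- The splitting field `E` of the generic trinomial over `F(t)`, with its roots enumerated and all
their permutations realized by automorphisms. -/
theorem exists_generic {n : ℕ} {F : Type u} [Field F] [IsAlgClosed F] (hn : 2 ≤ n)
    (hn0 : (n : F) ≠ 0) (hn1 : (n : F) ≠ 1) :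
    ∃ (E : Type u) (_ : Field E) (_ : Algebra (RatFunc F) E) (_ : Algebra F E)
      (_ : IsScalarTower F (RatFunc F) E) (y : Fin n → E),
      FiniteDimensional (RatFunc F) E ∧
      Function.Injective y ∧
      X ^ n - X - C (algebraMap (RatFunc F) E RatFunc.X) = ∏ i, (X - C (y i)) ∧
      ∀ τ : Equiv.Perm (Fin n), ∃ σ : Gal(E/RatFunc F), ∀ i, σ (y i) = y (τ i) := by
  let q : (RatFunc F)[X] := X ^ n - X - C RatFunc.X
  have hq : q.Separable := separable_trinomial hn hn0
  have hqm : q.Monic := monic_trinomial hn _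
  have hqd : q.natDegree = n := natDegree_trinomial hn _
  have hqmap : q.map (algebraMap (RatFunc F) q.SplittingField) =
      X ^ n - X - C (algebraMap (RatFunc F) q.SplittingField RatFunc.X) := by
    simp [q]
  obtain ⟨y, hinj, hy⟩ := enum_roots (n := n)
    (q.map (algebraMap (RatFunc F) q.SplittingField)) (hqm.map _)
    (SplittingField.splits q) hq.map (by rw [natDegree_map, hqd])
  have : IsGalois (RatFunc F) q.SplittingField := IsGalois.of_separable_splitting_field hq
  refine ⟨q.SplittingField, inferInstance, inferInstance, inferInstance, inferInstance, y,
    inferInstance, hinj, hqmap ▸ hy, ?_⟩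
  refine galois_full hn hn0 hn1 y hinj (hqmap ▸ hy) ?_
  have h := SplittingField.adjoin_rootSet q
  rw [← top_le_iff, ← IntermediateField.toSubalgebra_le_toSubalgebra,
    IntermediateField.top_toSubalgebra, ← h]
  refine le_trans (Algebra.adjoin_mono ?_) (IntermediateField.algebra_adjoin_le_adjoin _ _)
  intro z hz
  have hz2 := (mem_rootSet.1 hz).2
  rw [aeval_def, ← eval_map, hy, eval_prod, Finset.prod_eq_zero_iff] at hz2
  obtain ⟨i, -, hi⟩ := hz2
  exact ⟨i, by simpa [sub_eq_zero, eq_comm] using hi⟩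

/-- A polynomial whose roots are distinct and conjugate is irreducible: it is the minimal polynomial of
any of its roots. -/
theorem irreducible_of_conj {K L ι : Type*} [Field K] [Field L] [Algebra K L] [Fintype ι]
    [FiniteDimensional K L] (Q : K[X]) (u : ι → L) (hu : Function.Injective u)
    (i₀ : ι) (hprod : Q.map (algebraMap K L) = ∏ i, (X - C (u i)))
    (hconj : ∀ i, ∃ σ : L ≃ₐ[K] L, σ (u i₀) = u i) : Irreducible Q := by
  have hint : IsIntegral K (u i₀) := Algebra.IsIntegral.isIntegral _
  have h1 : minpoly K (u i₀) ∣ Q := by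
    apply minpoly.dvd
    rw [aeval_def, ← eval_map, hprod, eval_prod]
    exact Finset.prod_eq_zero (Finset.mem_univ i₀) (by simp)
  have h2 : Q ∣ minpoly K (u i₀) := by
    rw [← map_dvd_map' (algebraMap K L), hprod]
    refine Finset.prod_dvd_of_coprime
      (fun i _ j _ hij => pairwise_coprime_X_sub_C hu hij) fun i _ => ?_
    rw [dvd_iff_isRoot, IsRoot, eval_map, ← aeval_def]
    obtain ⟨σ, hσ⟩ := hconj i
    rw [← hσ]
    change aeval ((σ : L →ₐ[K] L) (u i₀)) _ = 0
    rw [aeval_algHom_apply, minpoly.aeval, map_zero]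
  exact (associated_of_dvd_dvd h1 h2).irreducible (minpoly.irreducible hint)

/-- The identification of `F[U, t]` with `F[t][U]`: variable `0` becomes the outer variable `X` and
variable `1` becomes `C X`. -/
noncomputable def toBivariate (F : Type u) [Field F] : MvPolynomial (Fin 2) F ≃ₐ[F] F[X][X] :=
  (MvPolynomial.finSuccEquiv F 1).trans (Polynomial.mapAlgEquiv (MvPolynomial.uniqueAlgEquiv F (Fin 1)))

theorem toBivariate_X0 (F : Type u) [Field F] : toBivariate F (MvPolynomial.X 0) = X := by
  simp [toBivariate, MvPolynomial.finSuccEquiv_X_zero]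

theorem toBivariate_X1 (F : Type u) [Field F] : toBivariate F (MvPolynomial.X 1) = C X := by
  have := MvPolynomial.finSuccEquiv_X_succ (R := F) (j := (0 : Fin 1))
  simp only [Fin.succ_zero_eq_one] at this
  simp [toBivariate, this]

theorem irreducible_resolvent {n : ℕ} {F : Type u} [Field F] [IsAlgClosed F] (hn : 2 ≤ n)
    (hn0 : (n : F) ≠ 0) (hn1 : (n : F) ≠ 1) (α : Fin n → F) (hα : Function.Injective α)
    (P : MvPolynomial (Fin 2) F)
    (hP : ∀ (R : Type u) [CommRing R] [Algebra F R] (t u : R)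
      (y : Fin n → R), X ^ n - X - C t = ∏ i, (X - C (y i)) →
      MvPolynomial.aeval ![u, t] P =
        ∏ τ : Equiv.Perm (Fin n), (u - ∑ i, algebraMap F R (α i) * y (τ i))) :
    Irreducible P := by
  obtain ⟨E, _, _, _, _, y, _, hinj, hy, hfull⟩ := exists_generic hn hn0 hn1
  let : Algebra F[X] E := ((algebraMap (RatFunc F) E).comp (algebraMap F[X] (RatFunc F))).toAlgebra
  have : IsScalarTower F[X] (RatFunc F) E := IsScalarTower.of_algebraMap_eq fun _ => rfl
  have : IsScalarTower F F[X] E := IsScalarTower.of_algebraMap_eq fun a => by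
    rw [IsScalarTower.algebraMap_apply F[X] (RatFunc F) E,
      ← IsScalarTower.algebraMap_apply F F[X] (RatFunc F),
      ← IsScalarTower.algebraMap_apply F (RatFunc F) E]
  let w (τ : Equiv.Perm (Fin n)) : E := ∑ i, algebraMap F E (α i) * y (τ i)
  have hw : Function.Injective w := resolvent_roots_distinct hn0 y hinj
    (fun τ => (hfull τ).elim fun σ h => ⟨(AlgEquiv.restrictScalars F σ : E →ₐ[F] E), h⟩) α hα
  set t : E := algebraMap (RatFunc F) E RatFunc.X with ht
  have hmap (p : MvPolynomial (Fin 2) F) :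
      (toBivariate F p).map (algebraMap F[X] E) = MvPolynomial.aeval ![(X : E[X]), C t] p := by
    have : ((Polynomial.mapAlgHom (Algebra.ofId F[X] E |>.restrictScalars F)).comp
        (toBivariate F : MvPolynomial (Fin 2) F →ₐ[F] F[X][X])) =
        MvPolynomial.aeval ![(X : E[X]), C t] := by
      ext i : 1
      fin_cases i
      · simp [toBivariate_X0]
      · simp [toBivariate_X1, ht,
          IsScalarTower.algebraMap_apply F[X] (RatFunc F) E]
    exact DFunLike.congr_fun this p
  have hprod : (toBivariate F P).map (algebraMap F[X] E) = ∏ τ, (X - C (w τ)) := by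
    have h2 := congrArg (Polynomial.map (C : E →+* E[X])) hy
    rw [hmap, hP E[X] (C t) X (fun i => C (y i)) (by simpa [Polynomial.map_prod] using h2)]
    simp [w, Polynomial.algebraMap_apply]
  have hainj : Function.Injective (algebraMap F[X] E) :=
    (algebraMap (RatFunc F) E).injective.comp (IsFractionRing.injective F[X] (RatFunc F))
  have hmonic : (toBivariate F P).Monic := by
    apply monic_of_injective hainj
    rw [hprod]
    exact monic_prod_of_monic _ _ fun τ _ => monic_X_sub_C _
  rw [← MulEquiv.irreducible_iff (toBivariate F),
    hmonic.irreducible_iff_irreducible_map_fraction_map (K := RatFunc F)]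
  refine irreducible_of_conj _ w hw 1 ?_ ?_
  · rw [Polynomial.map_map, ← IsScalarTower.algebraMap_eq, hprod]
  · intro τ
    obtain ⟨σ, hσ⟩ := hfull τ
    refine ⟨σ, ?_⟩
    simp only [w, map_sum, map_mul, Equiv.Perm.one_apply, hσ]
    refine Finset.sum_congr rfl fun i _ => ?_
    rw [IsScalarTower.algebraMap_apply F (RatFunc F) E, AlgEquiv.commutes]

theorem discr_ne_zero {n : ℕ} {F : Type u} [Field F] [IsAlgClosed F] (hn : 2 ≤ n)
    (hn0 : (n : F) ≠ 0) (hn1 : (n : F) ≠ 1) (α : Fin n → F) (hα : Function.Injective α)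
    (D : F[X])
    (hD : ∀ (R : Type u) [CommRing R] [Algebra F R] (t : R)
      (y : Fin n → R), X ^ n - X - C t = ∏ i, (X - C (y i)) →
      aeval t D = ∏ τ : Equiv.Perm (Fin n), ∏ ρ ∈ Finset.univ.erase (1 : Equiv.Perm (Fin n)),
        (∑ i, algebraMap F R (α i) * y (τ i) - ∑ i, algebraMap F R (α i) * y (τ (ρ i)))) :
    D ≠ 0 := by
  obtain ⟨E, _, _, _, _, y, _, hinj, hy, hfull⟩ := exists_generic hn hn0 hn1
  have hw := resolvent_roots_distinct hn0 y hinj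
    (fun τ => (hfull τ).elim fun σ h => ⟨(AlgEquiv.restrictScalars F σ : E →ₐ[F] E), h⟩) α hα
  rintro rfl
  have h := hD E _ y hy
  rw [map_zero, eq_comm, Finset.prod_eq_zero_iff] at h
  obtain ⟨τ, -, h⟩ := h
  rw [Finset.prod_eq_zero_iff] at h
  obtain ⟨ρ, hρ, h⟩ := h
  have h2 : τ = τ * ρ := hw (sub_eq_zero.1 h)
  exact (Finset.mem_erase.1 hρ).1 (by simpa using h2.symm)

/-! ### Specialization over a PAC field -/

/-- Enumeration of the roots with multiplicity. -/
theorem enum_roots_multiset {n : ℕ} {L : Type*} [Field L] (p : L[X]) (hm : p.Monic)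
    (hs : p.Splits) (hd : p.natDegree = n) : ∃ y : Fin n → L, p = ∏ i, (X - C (y i)) := by
  have hc : p.roots.toList.length = n := by
    rw [Multiset.length_toList, ← hd]
    exact hs.natDegree_eq_card_roots.symm
  subst hc
  refine ⟨fun i => p.roots.toList[i], ?_⟩
  dsimp only
  erw [Fin.prod_univ_fun_getElem p.roots.toList (fun z => X - C z)]
  conv_lhs => rw [hs.eq_prod_roots_of_monic hm, ← Multiset.coe_toList p.roots]
  simp

/-- A zero `(u, t)` of the resolvent in `k × k` at which its discriminant does not vanish: `u` is one of
the sums `∑ i, α i * y (τ i)` for the roots `y` of `X ^ n - X - t`, and these sums are distinct. -/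
theorem exists_point {n : ℕ} {k : Type u} [Field k] (hPAC : IsPAC k) (hn : 2 ≤ n)
    (hn0 : (n : k) ≠ 0) (hn1 : (n : k) ≠ 1) (g : k[X]) (α : Fin n → AlgebraicClosure k)
    (hα : Function.Injective α)
    (hg : g.map (algebraMap k (AlgebraicClosure k)) = ∏ i, (X - C (α i))) :
    ∃ u t : k, ∀ y : Fin n → AlgebraicClosure k,
      X ^ n - X - C (algebraMap k (AlgebraicClosure k) t) = ∏ i, (X - C (y i)) →
      (∃ τ : Equiv.Perm (Fin n), algebraMap k (AlgebraicClosure k) u = ∑ i, α i * y (τ i)) ∧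
      Function.Injective fun τ : Equiv.Perm (Fin n) => ∑ i, α i * y (τ i) := by
  have hn0' : (n : AlgebraicClosure k) ≠ 0 := by
    rw [← map_natCast (algebraMap k (AlgebraicClosure k))]
    exact fun h => hn0 ((map_eq_zero _).1 h)
  have hn1' : (n : AlgebraicClosure k) ≠ 1 := by
    rw [← map_natCast (algebraMap k (AlgebraicClosure k)), ← map_one (algebraMap k _)]
    exact fun h => hn1 ((algebraMap k (AlgebraicClosure k)).injective h)
  obtain ⟨f, hf⟩ := exists_resolvent g α hg
  obtain ⟨D, hD⟩ := exists_discr α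
  have hirr := irreducible_resolvent hn hn0' hn1' α hα _ hf
  have hD0 := discr_ne_zero hn hn0' hn1' α hα D hD
  have hinf := hPAC f hirr
  set ι := algebraMap k (AlgebraicClosure k) with hι
  -- A zero of `f` makes its first coordinate one of the sums attached to any root enumeration.
  have hroot (x : k × k) (hx : MvPolynomial.eval ![x.1, x.2] f = 0)
      (y : Fin n → AlgebraicClosure k) (hy : X ^ n - X - C (ι x.2) = ∏ i, (X - C (y i))) :
      ∃ τ : Equiv.Perm (Fin n), ι x.1 = ∑ i, α i * y (τ i) := by
    have h := hf _ (ι x.2) (ι x.1) y hy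
    have h2 : MvPolynomial.aeval ![ι x.1, ι x.2] (MvPolynomial.map ι f) = 0 := by
      rw [MvPolynomial.aeval_map_algebraMap]
      have : ![ι x.1, ι x.2] = ι ∘ ![x.1, x.2] := by
        ext i; fin_cases i <;> rfl
      rw [this, MvPolynomial.aeval_def, ← MvPolynomial.eval₂_comp, hx, map_zero]
    rw [h2, eq_comm, Finset.prod_eq_zero_iff] at h
    obtain ⟨τ, -, h⟩ := h
    exact ⟨τ, sub_eq_zero.1 h⟩
  obtain ⟨x, hx, hxD⟩ : ∃ x : k × k, MvPolynomial.eval ![x.1, x.2] f = 0 ∧ D.eval (ι x.2) ≠ 0 := by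
    by_contra! hcon
    apply hinf
    have hfin : {t : k | D.eval (ι t) = 0}.Finite := by
      refine Set.Finite.subset (Set.Finite.preimage ι.injective.injOn (finite_setOfPred_isRoot hD0)) ?_
      intro t ht
      exact ht
    have hfib (t : k) : {u : k | MvPolynomial.eval ![u, t] f = 0}.Finite := by
      obtain ⟨y, hy⟩ := enum_roots_multiset (n := n) (X ^ n - X - C (ι t)) (monic_trinomial hn _)
        (IsAlgClosed.splits _) (natDegree_trinomial hn _)
      refine Set.Finite.subset (Set.Finite.preimage ι.injective.injOn
        (Set.finite_range fun τ : Equiv.Perm (Fin n) => ∑ i, α i * y (τ i))) ?_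
      intro u hu
      obtain ⟨τ, hτ⟩ := hroot (u, t) hu y hy
      exact ⟨τ, hτ.symm⟩
    refine Set.Finite.subset (hfin.biUnion fun t _ => (hfib t).image fun u => (u, t)) ?_
    rintro ⟨u, t⟩ hx
    exact Set.mem_biUnion (hcon _ hx) ⟨u, hx, rfl⟩
  refine ⟨x.1, x.2, fun y hy => ⟨hroot x hx y hy, fun τ ρ h => ?_⟩⟩
  by_contra hne
  apply hxD
  rw [← coe_aeval_eq_eval, hD _ (ι x.2) y hy]
  refine Finset.prod_eq_zero (Finset.mem_univ τ) (Finset.prod_eq_zero (i := τ⁻¹ * ρ) ?_ ?_)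
  · simpa [inv_mul_eq_one] using hne
  · rw [sub_eq_zero]
    simpa using h

theorem infinite_of_isPAC {k : Type u} [Field k] (hPAC : IsPAC k) : Infinite k := by
  have h := hPAC (MvPolynomial.X 0) (by
    rw [MvPolynomial.map_X]
    exact MvPolynomial.X_prime.irreducible)
  by_contra hfin
  rw [not_infinite_iff_finite] at hfin
  exact h (Set.toFinite _)

/-- In characteristic `p > 2` the degrees used are congruent to `2` modulo `p`; this is the only place
where characteristic `2` is excluded. -/
theorem exists_degree {k : Type u} [Field k] (hchar : ringChar k ≠ 2) (d : ℕ) :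
    ∃ n : ℕ, d ≤ n ∧ 2 ≤ n ∧ (n : k) ≠ 0 ∧ (n : k) ≠ 1 := by
  have h2 : (2 : k) ≠ 0 := Ring.two_ne_zero hchar
  have h1 : (2 : k) ≠ 1 := by
    intro h
    have : (1 : k) = 0 := by linear_combination h
    exact one_ne_zero this
  by_cases hp : ringChar k = 0
  · have : CharZero k := (CharP.ringChar_zero_iff_CharZero k).1 hp
    exact ⟨d + 2, by omega, by omega, by exact_mod_cast (by omega : d + 2 ≠ 0),
      by exact_mod_cast (by omega : d + 2 ≠ 1)⟩
  · have hc : ((ringChar k * d + 2 : ℕ) : k) = 2 := by simp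
    refine ⟨ringChar k * d + 2, ?_, by omega, by rwa [hc], by rwa [hc]⟩
    nlinarith [Nat.pos_of_ne_zero hp]

/-- The missing degree is filled by linear factors at points of `k` that are not roots of `p`. -/
theorem exists_separable_multiple {k : Type u} [Field k] [Infinite k] (p : k[X]) (hp : p.Monic)
    (hs : p.Separable) {n : ℕ} (hn : p.natDegree ≤ n) :
    ∃ g : k[X], p ∣ g ∧ g.Monic ∧ g.Separable ∧ g.natDegree = n := by
  have hfin : {b : k | p.IsRoot b}.Finite := finite_setOfPred_isRoot hp.ne_zero
  obtain ⟨s, hs1, hs2⟩ := hfin.infinite_compl.exists_subset_card_eq (n - p.natDegree)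
  have hm : (∏ b ∈ s, (X - C b)).Monic := monic_prod_of_monic _ _ fun b _ => monic_X_sub_C b
  refine ⟨p * ∏ b ∈ s, (X - C b), dvd_mul_right _ _, hp.mul hm, hs.mul ?_ ?_, ?_⟩
  · exact separable_prod_X_sub_C_iff'.2 fun _ _ _ _ h => h
  · refine IsCoprime.prod_right fun b hb => IsCoprime.symm ?_
    rw [(irreducible_X_sub_C b).coprime_iff_not_dvd, dvd_iff_isRoot]
    exact hs1 hb
  · rw [hp.natDegree_mul hm, natDegree_prod_of_monic _ _ fun b _ => monic_X_sub_C b]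
    simp [hs2, hn]

theorem mem_adjoin {k : Type u} {K : Type v} [Field k] [Field K] [Algebra k K]
    [IsSepClosed K] [Algebra.IsSeparable k K] [Algebra.IsAlgebraic k K]
    (hPAC : IsPAC k) (hchar : ringChar k ≠ 2) (x : K) :
    x ∈ IntermediateField.adjoin k
      {y : K | ∃ n : ℕ, 2 ≤ n ∧ ∃ c : k, y ^ n - y = algebraMap k K c} := by
  classical
  have := infinite_of_isPAC hPAC
  obtain ⟨n, hdn, hn, hn0, hn1⟩ := exists_degree hchar (minpoly k x).natDegree
  obtain ⟨g, hxg, hgm, hgs, hgd⟩ := exists_separable_multiple (minpoly k x)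
    (minpoly.monic (Algebra.IsIntegral.isIntegral x)) (Algebra.IsSeparable.isSeparable k x) hdn
  let ι : K →ₐ[k] AlgebraicClosure k := IsAlgClosed.lift
  obtain ⟨a, ha, hga⟩ := enum_roots (n := n) (g.map (algebraMap k K)) (hgm.map _)
    (IsSepClosed.splits_of_separable _ hgs.map) hgs.map (by rw [natDegree_map, hgd])
  obtain ⟨u, t, hut⟩ := exists_point hPAC hn hn0 hn1 g (fun i => ι (a i))
    (ι.injective.comp ha) (by
      have h := congrArg (Polynomial.map (ι : K →+* AlgebraicClosure k)) hga
      rw [Polynomial.map_map, AlgHom.comp_algebraMap] at h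
      simpa [Polynomial.map_prod] using h)
  let q : k[X] := X ^ n - X - C t
  have hqF : q.map (algebraMap k (AlgebraicClosure k)) =
      X ^ n - X - C (algebraMap k (AlgebraicClosure k) t) := by simp [q]
  have hqs : q.Separable := by
    obtain ⟨y, hy⟩ := enum_roots_multiset (n := n)
      (X ^ n - X - C (algebraMap k (AlgebraicClosure k) t)) (monic_trinomial hn _)
      (IsAlgClosed.splits _) (natDegree_trinomial hn _)
    rw [← separable_map (algebraMap k (AlgebraicClosure k)), hqF, hy, separable_prod_X_sub_C_iff]
    intro i j hij
    -- If `y i = y j`, the identity and the transposition `(i j)` give the same sum.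
    have h : (1 : Equiv.Perm (Fin n)) = Equiv.swap i j := (hut y hy).2 <|
      Finset.sum_congr rfl fun l _ => by
        rcases eq_or_ne l i with rfl | hl
        · simp [hij]
        rcases eq_or_ne l j with rfl | hl2
        · simp [hij]
        · simp [Equiv.swap_apply_of_ne_of_ne hl hl2]
    exact Equiv.swap_eq_one_iff.1 h.symm
  have hqK : q.map (algebraMap k K) = X ^ n - X - C (algebraMap k K t) := by simp [q]
  obtain ⟨η, -, hη⟩ := enum_roots (n := n) (q.map (algebraMap k K))
    ((monic_trinomial hn t).map _) (IsSepClosed.splits_of_separable _ hqs.map) hqs.map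
    (by rw [natDegree_map, natDegree_trinomial hn])
  rw [hqK] at hη
  obtain ⟨⟨τ, hτ⟩, hdist⟩ := hut (fun i => ι (η i)) (by
    have h := congrArg (Polynomial.map (ι : K →+* AlgebraicClosure k)) hη
    simpa [Polynomial.map_prod] using h)
  have hτK : algebraMap k K u = ∑ i, a i * η (τ i) := by
    apply ι.injective
    change ι _ = ι _
    rw [AlgHom.commutes, hτ]
    simp
  obtain ⟨i₀, hi₀⟩ : ∃ i, a i = x := by
    have h : (g.map (algebraMap k K)).eval x = 0 := by
      rw [eval_map, ← aeval_def]
      exact (minpoly.dvd_iff).1 hxg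
    rw [hga, eval_prod, Finset.prod_eq_zero_iff] at h
    obtain ⟨i, -, hi⟩ := h
    exact ⟨i, by simpa [sub_eq_zero, eq_comm] using hi⟩
  have : IsSepClosure k K := ⟨inferInstance, inferInstance⟩
  have : IsGalois k K := inferInstance
  set M := IntermediateField.adjoin k
      {y : K | ∃ n : ℕ, 2 ≤ n ∧ ∃ c : k, y ^ n - y = algebraMap k K c} with hM
  have hηM (i : Fin n) : η i ∈ M := by
    refine IntermediateField.subset_adjoin _ _ ⟨n, hn, t, ?_⟩
    have h := congrArg (eval (η i)) hη
    rw [eval_prod, Finset.prod_eq_zero (Finset.mem_univ i) (by simp)] at h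
    simpa [sub_eq_zero] using h
  rw [← InfiniteGalois.fixedField_fixingSubgroup M, IntermediateField.mem_fixedField_iff]
  intro σ hσ
  rw [IntermediateField.mem_fixingSubgroup_iff] at hσ
  obtain ⟨π, hπ⟩ := exists_perm a ha hga σ
  have h1 : ∑ i, a i * η (τ i) = ∑ i, a i * η ((τ * π⁻¹) i) := by
    have h := congrArg σ hτK
    rw [AlgEquiv.commutes, hτK] at h
    rw [h, map_sum]
    refine Fintype.sum_equiv π _ _ fun i => ?_
    rw [map_mul, hπ, hσ _ (hηM _)]
    simp
  have h2 : τ = τ * π⁻¹ := hdist (by simpa using congrArg ι h1)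
  have h3 : π = 1 := by simpa using h2
  rw [← hi₀, hπ, h3, Equiv.Perm.one_apply]

end PACTrinomial

theorem stmt_1 (k K : Type*) [Field k] [Field K] [Algebra k K]
    [IsSepClosed K] [Algebra.IsSeparable k K] [Algebra.IsAlgebraic k K]
    (hPAC : IsPAC k) (hchar : ringChar k ≠ 2) :
    IntermediateField.adjoin k
      {y : K | ∃ n : ℕ, 2 ≤ n ∧ ∃ c : k, y ^ n - y = algebraMap k K c} = ⊤ :=
  eq_top_iff.2 fun x _ => PACTrinomial.mem_adjoin hPAC hchar x
end
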